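/- arXiv:1504.06522 — 5 statements merged into one kernel-verified Lean document; each statement's English description precedes it below -/
import Mathlib

section
/- Set eps_i := 1 if i <= 2 and eps_i := 2 if i >= 3. Assume 1 <= i <= n and (i <= 3 or n <= 4). Then for all nonnegative integers k and l, S(D, (k + eps_i*l)*omega_i) = S(D, k*omega_i) + S(D, eps_i*l*omega_i). -/
open scoped Pointwise

/-- A single step in a Dyck path: `α_{p,q} → α_{p,q+1}` or `α_{p,q} → α_{p+1,q}`. -/
def RootStep (a b : ℕ × ℕ) : Prop :=
  (b.1 = a.1 ∧ b.2 = a.2 + 1) ∨ (b.1 = a.1 + 1 ∧ b.2 = a.2)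

/-- `inR n i (p,q)` means that `α_{p,q}` is a positive root of `B_n`
(`1 ≤ p ≤ n`, `p ≤ q ≤ 2n-p`) belonging to `R_i^+`, i.e. `p ≤ i ≤ q`. -/
def inR (n i : ℕ) (a : ℕ × ℕ) : Prop :=
  1 ≤ a.1 ∧ a.1 ≤ i ∧ i ≤ a.2 ∧ a.1 + a.2 ≤ 2 * n

/-- A type 1 Dyck path for `R_i^+` of `B_n`, recorded as the list of its roots. -/
def IsType1 (n i : ℕ) (L : List (ℕ × ℕ)) : Prop :=
  L ≠ [] ∧ L.Chain' RootStep ∧ (∀ x ∈ L, inR n i x) ∧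
    ((L.head? = some (1, i) ∧ L.getLast? = some (i, 2 * n - i - 1)) ∨
     (L.head? = some (1, i + 1) ∧ L.getLast? = some (i, 2 * n - i)))

/-- A type 2 (double) Dyck path for `R_i^+` of `B_n`, recorded as the pair of lists of
roots of its two constituent single paths. -/
def IsType2 (n i : ℕ) (L1 L2 : List (ℕ × ℕ)) : Prop :=
  ∃ j : ℕ, 1 ≤ j ∧ j < i ∧
    L1 ≠ [] ∧ L2 ≠ [] ∧ L1.Chain' RootStep ∧ L2.Chain' RootStep ∧
    (∀ x ∈ L1, inR n i x) ∧ (∀ x ∈ L2, inR n i x) ∧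
    L1.head? = some (1, i) ∧ L2.head? = some (2, i) ∧
    L1.getLast? = some (j, 2 * n - j) ∧ L2.getLast? = some (j + 1, 2 * n - j - 1) ∧
    (∀ x, ¬(x ∈ L1 ∧ x ∈ L2))

/-- The constant `c_i`: `1` if `i = 1` or `i = n`, and `2` if `2 ≤ i ≤ n-1`. -/
def cB (n i : ℕ) : ℕ := if i = 1 ∨ i = n then 1 else 2

/-- `SD n i m` is the set `S(D, m·ω_i)` of lattice points of the Dyck-path polytope:
multi-exponents `s` supported on `R_i^+` with `∑_{β ∈ p} s_β ≤ m` for every type 1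
Dyck path `p` and `∑_{β ∈ p} s_β ≤ m·c_i` for every type 2 Dyck path `p`.
(Elements of a Dyck path are pairwise distinct, so summation over the recording
lists agrees with summation over the underlying set of roots.) -/
def SD (n i m : ℕ) : Set ((ℕ × ℕ) → ℕ) :=
  {s | (∀ β, ¬ inR n i β → s β = 0) ∧
       (∀ L, IsType1 n i L → (L.map s).sum ≤ m) ∧
       (∀ L1 L2, IsType2 n i L1 L2 → ((L1 ++ L2).map s).sum ≤ m * cB n i)}

/-- `ε_i`: `1` if `i ≤ 2`, and `2` if `i ≥ 3`. -/
def epsB (i : ℕ) : ℕ := if i ≤ 2 then 1 else 2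

/-- The prefix-sum function of the indicator of the column `p`. -/
def unitStep (p k : ℕ) : ℕ := min (k - p) 1

/-- The Dyck path inequalities of level `m` for a strip of three rows of `u + 2` columns. -/
structure Strip (u m : ℕ) (α β γ : ℕ → ℕ) (x y : ℕ) : Prop where
  lower : ∀ σ τ, σ ≤ τ → τ ≤ u →
    α (σ + 1) + β (τ + 1) + γ (u + 1) ≤ m + β σ + γ τ
  upper : ∀ σ τ, 1 ≤ σ → σ ≤ τ → τ ≤ u + 1 →
    α (σ + 1) + β (τ + 1) + γ (u + 2) ≤ m + α 1 + β σ + γ τ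
  double : ∀ σ τ, τ < σ → σ ≤ u + 1 →
    α (σ + 1) + β (u + 2) + y + β (τ + 1) + γ (u + 2) ≤ 2 * m + β σ + γ τ
  doubleTop : ∀ τ, τ ≤ u + 1 →
    α (u + 2) + x + y + β (τ + 1) + γ (u + 2) ≤ 2 * m + γ τ

/-- `f'` has nonnegative increments dominated by those of `f` on the first `u + 2` columns. -/
def Dominated (u : ℕ) (f' f : ℕ → ℕ) : Prop :=
  f' 0 = 0 ∧ ∀ k, k ≤ u + 1 → f' k ≤ f' (k + 1) ∧ f' (k + 1) + f k ≤ f' k + f (k + 1)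

/-- A point of level `m` is a sum of points of levels `d` and `m - d` for a small `d`. -/
def Peels (u m : ℕ) (α β γ : ℕ → ℕ) (x y : ℕ) : Prop :=
  ∃ d, (d = 1 ∨ d = 2 ∧ 0 < α 1) ∧ d ≤ m ∧ ∃ (α' β' γ' : ℕ → ℕ) (x' y' : ℕ),
    Dominated u α' α ∧ Dominated u β' β ∧ Dominated u γ' γ ∧ x' ≤ x ∧ y' ≤ y ∧
    Strip u d α' β' γ' x' y' ∧
    Strip u (m - d) (α - α') (β - β') (γ - γ') (x - x') (y - y')

theorem Dominated.le {u : ℕ} {f' f : ℕ → ℕ} (h : Dominated u f' f) {k : ℕ} (hk : k ≤ u + 2) :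
    f' k ≤ f k := by
  induction k with
  | zero => simp [h.1]
  | succ k ih =>
    have h1 := ih (by omega)
    have h2 := h.2 k (by omega)
    omega

theorem dominated_unitStep {u p : ℕ} {f : ℕ → ℕ} (hf : Monotone f)
    (h : p ≤ u + 1 → f p < f (p + 1)) : Dominated u (unitStep p) f := by
  refine ⟨by simp [unitStep], fun k hk => ?_⟩
  have h1 : f k ≤ f (k + 1) := hf (by omega)
  rcases eq_or_ne p k with rfl | hne
  · have := h hk
    simp only [unitStep]
    omega
  · simp only [unitStep]
    omega

theorem dominated_add_unitStep {u p q : ℕ} {f : ℕ → ℕ} (hf : Monotone f) (hpq : p ≠ q)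
    (hp : f p < f (p + 1)) (hq : f q < f (q + 1)) :
    Dominated u (unitStep p + unitStep q) f := by
  refine ⟨by simp [unitStep], fun k hk => ?_⟩
  have h1 : f k ≤ f (k + 1) := hf (by omega)
  simp only [unitStep, Pi.add_apply]
  rcases eq_or_ne p k with rfl | hne
  · omega
  · rcases eq_or_ne q k with rfl | hne'
    · omega
    · omega

/-- A point of a strip of level at least one. -/
structure StripPoint (u m : ℕ) (α β γ : ℕ → ℕ) (x y : ℕ) : Prop
    extends Strip u m α β γ x y where
  level : 1 ≤ m
  width : 1 ≤ u
  zeroA : α 0 = 0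
  zeroB : β 0 = 0
  zeroC : γ 0 = 0
  monoA : Monotone α
  monoB : Monotone β
  monoC : Monotone γ

theorem exists_first_increase {f : ℕ → ℕ} {a b : ℕ} (hab : a ≤ b) (h : f a < f b) :
    ∃ p, a ≤ p ∧ p < b ∧ f p < f (p + 1) ∧ f p ≤ f a := by
  induction b, hab using Nat.le_induction with
  | base => omega
  | succ b hb ih =>
    by_cases h1 : f a < f b
    · obtain ⟨p, h2, h3, h4⟩ := ih h1
      exact ⟨p, h2, by omega, h4⟩
    · exact ⟨b, hb, by omega, by omega, by omega⟩

theorem exists_last_increase {f : ℕ → ℕ} (hf : Monotone f) {a b : ℕ} (hab : a ≤ b)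
    (h : f a < f b) : ∃ p, a ≤ p ∧ p < b ∧ f p < f (p + 1) ∧ f (p + 1) = f b := by
  induction b, hab using Nat.le_induction with
  | base => omega
  | succ b hb ih =>
    have h0 : f b ≤ f (b + 1) := hf (by omega)
    by_cases h1 : f b < f (b + 1)
    · exact ⟨b, hb, by omega, h1, rfl⟩
    · obtain ⟨p, h2, h3, h4, h5⟩ := ih (by omega)
      exact ⟨p, h2, by omega, h4, by omega⟩

theorem Peels.intro {u m : ℕ} {α β γ : ℕ → ℕ} {x y : ℕ} (d : ℕ)
    (hd : d = 1 ∨ d = 2 ∧ 0 < α 1) (hdm : d ≤ m) (α' β' γ' : ℕ → ℕ) (x' y' : ℕ)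
    (hα : Dominated u α' α) (hβ : Dominated u β' β) (hγ : Dominated u γ' γ)
    (hx : x' ≤ x) (hy : y' ≤ y) (hpoint : Strip u d α' β' γ' x' y')
    (hlower : ∀ σ τ, σ ≤ τ → τ ≤ u →
      α (σ + 1) + β (τ + 1) + γ (u + 1) + (d + β' σ + γ' τ) ≤
        m + β σ + γ τ + (α' (σ + 1) + β' (τ + 1) + γ' (u + 1)))
    (hupper : ∀ σ τ, 1 ≤ σ → σ ≤ τ → τ ≤ u + 1 →
      α (σ + 1) + β (τ + 1) + γ (u + 2) + (d + α' 1 + β' σ + γ' τ) ≤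
        m + α 1 + β σ + γ τ + (α' (σ + 1) + β' (τ + 1) + γ' (u + 2)))
    (hdouble : ∀ σ τ, τ < σ → σ ≤ u + 1 →
      α (σ + 1) + β (u + 2) + y + β (τ + 1) + γ (u + 2) + (2 * d + β' σ + γ' τ) ≤
        2 * m + β σ + γ τ + (α' (σ + 1) + β' (u + 2) + y' + β' (τ + 1) + γ' (u + 2)))
    (hdoubleTop : ∀ τ, τ ≤ u + 1 →
      α (u + 2) + x + y + β (τ + 1) + γ (u + 2) + (2 * d + γ' τ) ≤
        2 * m + γ τ + (α' (u + 2) + x' + y' + β' (τ + 1) + γ' (u + 2))) :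
    Peels u m α β γ x y := by
  refine ⟨d, hd, hdm, α', β', γ', x', y', hα, hβ, hγ, hx, hy, hpoint, ?_, ?_, ?_, ?_⟩
  · intro σ τ h1 h2
    have := hlower σ τ h1 h2
    have := hα.le (k := σ + 1) (by omega)
    have := hβ.le (k := τ + 1) (by omega)
    have := hγ.le (k := u + 1) (by omega)
    have := hβ.le (k := σ) (by omega)
    have := hγ.le (k := τ) (by omega)
    simp only [Pi.sub_apply]
    omega
  · intro σ τ h0 h1 h2
    have := hupper σ τ h0 h1 h2
    have := hα.le (k := σ + 1) (by omega)
    have := hβ.le (k := τ + 1) (by omega)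
    have := hγ.le (k := u + 2) (by omega)
    have := hα.le (k := 1) (by omega)
    have := hβ.le (k := σ) (by omega)
    have := hγ.le (k := τ) (by omega)
    simp only [Pi.sub_apply]
    omega
  · intro σ τ h1 h2
    have := hdouble σ τ h1 h2
    have := hα.le (k := σ + 1) (by omega)
    have := hβ.le (k := τ + 1) (by omega)
    have := hγ.le (k := u + 2) (by omega)
    have := hβ.le (k := u + 2) (by omega)
    have := hβ.le (k := σ) (by omega)
    have := hγ.le (k := τ) (by omega)
    simp only [Pi.sub_apply]
    omega
  · intro τ h2
    have := hdoubleTop τ h2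
    have := hα.le (k := u + 2) (by omega)
    have := hβ.le (k := τ + 1) (by omega)
    have := hγ.le (k := u + 2) (by omega)
    have := hγ.le (k := τ) (by omega)
    simp only [Pi.sub_apply]
    omega

/-- Variant of `Peels.intro` removing at most one unit from each row. -/
theorem StripPoint.peels {u m : ℕ} {α β γ : ℕ → ℕ} {x y : ℕ} (h : StripPoint u m α β γ x y)
    (p q r x' y' : ℕ) (hp : p ≤ u + 1 → α p < α (p + 1)) (hq : q ≤ u + 1 → β q < β (q + 1))
    (hr : r ≤ u + 1 → γ r < γ (r + 1)) (hx : x' ≤ x) (hy : y' ≤ y)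
    (hpoint : Strip u 1 (unitStep p) (unitStep q) (unitStep r) x' y')
    (hlower : ∀ σ τ, σ ≤ τ → τ ≤ u →
      α (σ + 1) + β (τ + 1) + γ (u + 1) + (1 + unitStep q σ + unitStep r τ) ≤
        m + β σ + γ τ + (unitStep p (σ + 1) + unitStep q (τ + 1) + unitStep r (u + 1)))
    (hupper : ∀ σ τ, 1 ≤ σ → σ ≤ τ → τ ≤ u + 1 →
      α (σ + 1) + β (τ + 1) + γ (u + 2) + (1 + unitStep p 1 + unitStep q σ + unitStep r τ) ≤
        m + α 1 + β σ + γ τ +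
          (unitStep p (σ + 1) + unitStep q (τ + 1) + unitStep r (u + 2)))
    (hdouble : ∀ σ τ, τ < σ → σ ≤ u + 1 →
      α (σ + 1) + β (u + 2) + y + β (τ + 1) + γ (u + 2) +
          (2 * 1 + unitStep q σ + unitStep r τ) ≤
        2 * m + β σ + γ τ + (unitStep p (σ + 1) + unitStep q (u + 2) + y' +
          unitStep q (τ + 1) + unitStep r (u + 2)))
    (hdoubleTop : ∀ τ, τ ≤ u + 1 →
      α (u + 2) + x + y + β (τ + 1) + γ (u + 2) + (2 * 1 + unitStep r τ) ≤
        2 * m + γ τ + (unitStep p (u + 2) + x' + y' + unitStep q (τ + 1) +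
          unitStep r (u + 2))) :
    Peels u m α β γ x y :=
  .intro 1 (.inl rfl) h.level _ _ _ x' y' (dominated_unitStep h.monoA hp)
    (dominated_unitStep h.monoB hq) (dominated_unitStep h.monoC hr) hx hy hpoint
    hlower hupper hdouble hdoubleTop

theorem StripPoint.base {u m : ℕ} {α β γ : ℕ → ℕ} {x y : ℕ} (h : StripPoint u m α β γ x y)
    {τ : ℕ} (hτ : τ ≤ u) : α 1 + β (τ + 1) + γ (u + 1) ≤ m + γ τ := by
  have h1 := h.lower 0 τ (by omega) hτ
  rw [h.zeroB, zero_add] at h1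
  omega

theorem StripPoint.cap {u m : ℕ} {α β γ : ℕ → ℕ} {x y : ℕ} (h : StripPoint u m α β γ x y)
    {σ : ℕ} (h1 : 1 ≤ σ) (h2 : σ ≤ u + 1) :
    α (σ + 1) + β (u + 2) + γ (u + 2) ≤ m + α 1 + β σ + γ (u + 1) :=
  h.upper σ (u + 1) h1 h2 le_rfl

theorem StripPoint.cap_last {u m : ℕ} {α β γ : ℕ → ℕ} {x y : ℕ}
    (h : StripPoint u m α β γ x y) :
    α (u + 2) + β (u + 2) + γ (u + 2) ≤ m + α 1 + β (u + 1) + γ (u + 1) :=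
  h.upper (u + 1) (u + 1) (by omega) le_rfl le_rfl

theorem StripPoint.doubleTop_last {u m : ℕ} {α β γ : ℕ → ℕ} {x y : ℕ}
    (h : StripPoint u m α β γ x y) :
    α (u + 2) + x + y + β (u + 2) + γ (u + 2) ≤ 2 * m + γ (u + 1) :=
  h.doubleTop (u + 1) le_rfl

theorem StripPoint.peels_of_corners {u m : ℕ} {α β γ : ℕ → ℕ} {x y : ℕ}
    (h : StripPoint u m α β γ x y) (ha : 0 < α 1) (hc : γ (u + 1) < γ (u + 2)) :
    Peels u m α β γ x y := by
  have h0 := h.zeroA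
  refine h.peels 0 (u + 2) (u + 1) 0 0 (fun _ => by simpa [h0] using ha) (by omega)
    (fun _ => hc) (by omega) (by omega)
    (by constructor <;> intros <;> simp only [unitStep] <;> omega) ?_ ?_ ?_ ?_ <;>
    simp only [unitStep]
  · intro σ τ h1 h2
    have := h.lower σ τ h1 h2
    omega
  · intro σ τ h1 h2 h3
    have := h.upper σ τ h1 h2 h3
    omega
  · intro σ τ h1 h2
    have := h.double σ τ h1 h2
    omega
  · intro τ h1
    have := h.doubleTop τ h1
    omega

theorem StripPoint.peels_of_cornerC {u m : ℕ} {α β γ : ℕ → ℕ} {x y : ℕ}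
    (h : StripPoint u m α β γ x y) (ha : α 1 = 0) (hc : γ (u + 1) < γ (u + 2)) :
    Peels u m α β γ x y := by
  have hA := h.zeroA
  have hB := h.zeroB
  have hC := h.zeroC
  have hu := h.width
  by_cases hb : 0 < β 1
  · refine h.peels (u + 2) 0 (u + 1) 0 0 (by omega) (fun _ => by simpa [hB] using hb)
      (fun _ => hc) (by omega) (by omega)
      (by constructor <;> intros <;> simp only [unitStep] <;> omega) ?_ ?_ ?_ ?_ <;>
      simp only [unitStep]
    · intro σ τ h1 h2
      have := h.lower σ τ h1 h2
      rcases Nat.eq_zero_or_pos σ with rfl | h0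
      · omega
      · have := h.upper σ τ h0 h1 (by omega)
        omega
    · intro σ τ h1 h2 h3
      have := h.upper σ τ h1 h2 h3
      omega
    · intro σ τ h1 h2
      have := h.double σ τ h1 h2
      omega
    · intro τ h1
      have := h.doubleTop τ h1
      omega
  have hlow : ∀ τ, 1 ≤ τ → τ ≤ u → β (τ + 1) + γ (u + 2) ≤ m + γ τ := fun τ h1 h2 => by
    have := h.upper 1 τ le_rfl h1 (by omega)
    have := h.monoB (show 0 ≤ 1 by omega)
    omega
  have hlow0 := h.lower 0 0 le_rfl (by omega)
  simp only [zero_add] at hlow0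
  by_cases hm : γ (u + 1) = m
  · have hC1 : γ 0 < γ (0 + 1) := by
      have := hlow 1 le_rfl hu
      simp only [zero_add]
      omega
    refine .intro 1 (.inl rfl) h.level (unitStep (u + 2)) (unitStep (u + 2))
      (unitStep 0 + unitStep (u + 1)) 0 0 (dominated_unitStep h.monoA (by omega))
      (dominated_unitStep h.monoB (by omega))
      (dominated_add_unitStep h.monoC (by omega) hC1 hc) (by omega) (by omega)
      (by constructor <;> intros <;> simp only [unitStep, Pi.add_apply] <;> omega)
      ?_ ?_ ?_ ?_ <;> simp only [unitStep, Pi.add_apply]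
    · intro σ τ h1 h2
      have := h.lower σ τ h1 h2
      rcases Nat.eq_zero_or_pos σ with rfl | h0
      · rcases Nat.eq_zero_or_pos τ with rfl | h0
        · omega
        · have := hlow τ h0 h2
          simp only [zero_add]
          omega
      · have := h.upper σ τ h0 h1 (by omega)
        omega
    · intro σ τ h1 h2 h3
      have := h.upper σ τ h1 h2 h3
      omega
    · intro σ τ h1 h2
      have := h.double σ τ h1 h2
      have h3 := h.double σ 0 (by omega) h2
      simp only [zero_add] at h3
      rcases Nat.eq_zero_or_pos τ with rfl | h0
      · omega
      · have := hlow τ h0 (by omega)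
        omega
    · intro τ h1
      have := h.doubleTop τ h1
      have h3 := h.doubleTop 0 (by omega)
      simp only [zero_add] at h3
      rcases Nat.eq_zero_or_pos τ with rfl | h0
      · omega
      · have := h.upper 1 τ le_rfl h0 h1
        have := h.monoA (show 0 ≤ 1 + 1 by omega)
        omega
  · have hlt : ∀ τ, τ ≤ u → β (τ + 1) + γ (u + 1) < m + γ τ := fun τ h2 => by
      rcases Nat.eq_zero_or_pos τ with rfl | h0
      · simp only [zero_add]
        omega
      · have := hlow τ h0 h2
        omega
    refine h.peels (u + 2) (u + 2) (u + 1) (min x (1 - min y 1)) (min y 1) (by omega) (by omega)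
      (fun _ => hc) (by omega) (by omega)
      (by constructor <;> intros <;> simp only [unitStep] <;> omega) ?_ ?_ ?_ ?_ <;>
      simp only [unitStep]
    · intro σ τ h1 h2
      have := h.lower σ τ h1 h2
      rcases Nat.eq_zero_or_pos σ with rfl | h0
      · have := hlt τ h2
        simp only [zero_add]
        omega
      · have := h.upper σ τ h0 h1 (by omega)
        omega
    · intro σ τ h1 h2 h3
      have := h.upper σ τ h1 h2 h3
      omega
    · intro σ τ h1 h2
      have := h.double σ τ h1 h2
      have := h.cap (σ := σ) (by omega) h2
      have := hlt τ (by omega)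
      omega
    · intro τ h1
      have := h.doubleTop τ h1
      have := h.cap_last
      have := hlt u le_rfl
      have := h.monoC (show u ≤ u + 1 by omega)
      rcases h1.lt_or_eq with h1 | rfl
      · have := hlt τ (by omega)
        have := h.monoB (show u + 1 ≤ u + 2 by omega)
        omega
      · simp only [add_assoc, Nat.reduceAdd] at *
        omega

/-- Variant of `Peels.intro` for points whose third row vanishes in its last column. -/
theorem StripPoint.peels_flat_of {u m : ℕ} {α β γ : ℕ → ℕ} {x y : ℕ}
    (h : StripPoint u m α β γ x y) (hc : γ (u + 2) = γ (u + 1)) (d : ℕ)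
    (hd : d = 1 ∨ d = 2 ∧ 0 < α 1) (hdm : d ≤ m) (α' β' γ' : ℕ → ℕ) (x' y' : ℕ)
    (hα : Dominated u α' α) (hβ : Dominated u β' β) (hγ : Dominated u γ' γ)
    (hx : x' ≤ x) (hy : y' ≤ y) (hpoint : Strip u d α' β' γ' x' y')
    (hlower : ∀ σ τ, σ ≤ τ → τ ≤ u →
      α (σ + 1) + β (τ + 1) + γ (u + 1) + (d + β' σ + γ' τ) ≤
        m + β σ + γ τ + (α' (σ + 1) + β' (τ + 1) + γ' (u + 1)))
    (hcap : ∀ σ, 1 ≤ σ → σ ≤ u + 1 →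
      α (σ + 1) + β (u + 2) + (d + α' 1 + β' σ) ≤ m + α 1 + β σ + (α' (σ + 1) + β' (u + 2)))
    (hdouble : y' < y → ∀ σ τ, τ < σ → σ ≤ u + 1 →
      α (σ + 1) + β (u + 2) + y + β (τ + 1) + γ (u + 1) + (2 * d + β' σ + γ' τ) ≤
        2 * m + β σ + γ τ + (α' (σ + 1) + β' (u + 2) + y' + β' (τ + 1) + γ' (u + 1)))
    (hdoubleTop : x' + y' < x + y → ∀ τ, τ ≤ u →
      α (u + 2) + x + y + β (τ + 1) + γ (u + 1) + (2 * d + γ' τ) ≤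
        2 * m + γ τ + (α' (u + 2) + x' + y' + β' (τ + 1) + γ' (u + 1)))
    (hlast : x' + y' < x + y → α (u + 2) + x + y + β (u + 2) + 2 * d ≤
        2 * m + (α' (u + 2) + x' + y' + β' (u + 2))) :
    Peels u m α β γ x y := by
  have hB := h.zeroB
  have hB' := hβ.1
  have hγ1 := hγ.2 (u + 1) le_rfl
  have hγ2 := hγ.2 u (by omega)
  have hγu : γ' (u + 1 + 1) = γ' (u + 1) := by
    have : γ (u + 1 + 1) = γ (u + 1) := hc
    omega
  have hα1 := hα.le (k := 1) (by omega)
  have hbase : ∀ τ, τ ≤ u → α 1 + β (τ + 1) + γ (u + 1) + (d + γ' τ) ≤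
      m + γ τ + (α' 1 + β' (τ + 1) + γ' (u + 1)) := fun τ hτ => by
    have := hlower 0 τ (by omega) hτ
    simp only [zero_add] at this
    omega
  have htop : α (u + 2) + β (u + 2) + (d + α' 1 + β' (u + 1)) ≤
      m + α 1 + β (u + 1) + (α' (u + 2) + β' (u + 2)) := hcap (u + 1) (by omega) le_rfl
  refine .intro d hd hdm α' β' γ' x' y' hα hβ hγ hx hy hpoint hlower ?_ ?_ ?_
  · intro σ τ h1 h2 h3
    rcases h3.lt_or_eq with h3 | rfl
    · have := hlower σ τ h2 (by omega)
      have : γ' (u + 2) = γ' (u + 1) := hγu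
      omega
    · have := hcap σ h1 h2
      have : β' (u + 1 + 1) = β' (u + 2) := rfl
      have : β (u + 1 + 1) = β (u + 2) := rfl
      have : γ' (u + 2) = γ' (u + 1) := hγu
      omega
  · intro σ τ h1 h2
    have : γ' (u + 2) = γ' (u + 1) := hγu
    rcases hy.lt_or_eq with hy | rfl
    · have := hdouble hy σ τ h1 h2
      omega
    · have := hbase τ (by omega)
      have := hcap σ (by omega) h2
      omega
  · intro τ h1
    have : γ' (u + 2) = γ' (u + 1) := hγu
    rcases h1.lt_or_eq with h1 | rfl
    · have := hbase τ (by omega)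
      have := (hβ.2 (u + 1) le_rfl)
      have : β' (u + 1 + 1) = β' (u + 2) := rfl
      have : β (u + 1 + 1) = β (u + 2) := rfl
      by_cases hxy : x' + y' < x + y
      · have := hdoubleTop hxy τ (by omega)
        omega
      · omega
    · have : β' (u + 1 + 1) = β' (u + 2) := rfl
      have : β (u + 1 + 1) = β (u + 2) := rfl
      by_cases hxy : x' + y' < x + y
      · have := hlast hxy
        omega
      · have := hbase u le_rfl
        omega

/-- Variant of `StripPoint.peels_flat_of` removing at most one unit from each row. -/
theorem StripPoint.peels_flat {u m : ℕ} {α β γ : ℕ → ℕ} {x y : ℕ}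
    (h : StripPoint u m α β γ x y) (hc : γ (u + 2) = γ (u + 1))
    (p q r x' y' : ℕ) (hp : p ≤ u + 1 → α p < α (p + 1)) (hq : q ≤ u + 1 → β q < β (q + 1))
    (hr : r ≤ u + 1 → γ r < γ (r + 1)) (hx : x' ≤ x) (hy : y' ≤ y)
    (hpoint : Strip u 1 (unitStep p) (unitStep q) (unitStep r) x' y')
    (hlower : ∀ σ τ, σ ≤ τ → τ ≤ u → α (σ + 1) + β (τ + 1) + γ (u + 1) = m + β σ + γ τ →
      p ≤ σ ∨ (σ ≤ q ∧ q ≤ τ) ∨ (τ ≤ r ∧ r ≤ u))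
    (hcap : ∀ σ, 1 ≤ σ → σ ≤ u + 1 → α (σ + 1) + β (u + 2) = m + α 1 + β σ →
      (1 ≤ p ∧ p ≤ σ) ∨ (σ ≤ q ∧ q ≤ u + 1))
    (hdouble : y' < y → ∀ σ τ, τ < σ → σ ≤ u + 1 →
      α (σ + 1) + β (u + 2) + y + β (τ + 1) + γ (u + 1) + (2 * 1 + unitStep q σ + unitStep r τ) ≤
        2 * m + β σ + γ τ + (unitStep p (σ + 1) + unitStep q (u + 2) + y' + unitStep q (τ + 1) +
          unitStep r (u + 1)))
    (hdoubleTop : x' + y' < x + y → ∀ τ, τ ≤ u →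
      α (u + 2) + x + y + β (τ + 1) + γ (u + 1) + (2 * 1 + unitStep r τ) ≤
        2 * m + γ τ + (unitStep p (u + 2) + x' + y' + unitStep q (τ + 1) + unitStep r (u + 1)))
    (hlast : x' + y' < x + y → α (u + 2) + x + y + β (u + 2) + 2 * 1 ≤
        2 * m + (unitStep p (u + 2) + x' + y' + unitStep q (u + 2))) :
    Peels u m α β γ x y := by
  refine h.peels_flat_of hc 1 (.inl rfl) h.level _ _ _ x' y' (dominated_unitStep h.monoA hp)
    (dominated_unitStep h.monoB hq) (dominated_unitStep h.monoC hr) hx hy hpoint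
    ?_ ?_ hdouble hdoubleTop hlast <;> simp only [unitStep]
  · intro σ τ h1 h2
    have h3 := h.lower σ τ h1 h2
    have h4 := hlower σ τ h1 h2
    by_cases h5 : α (σ + 1) + β (τ + 1) + γ (u + 1) = m + β σ + γ τ
    · have := h4 h5
      omega
    · omega
  · intro σ h1 h2
    have h3 := h.cap h1 h2
    have h4 := hcap σ h1 h2
    by_cases h5 : α (σ + 1) + β (u + 2) = m + α 1 + β σ
    · have := h4 h5
      omega
    · omega

theorem StripPoint.peels_of_no_cap {u m : ℕ} {α β γ : ℕ → ℕ} {x y : ℕ}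
    (h : StripPoint u m α β γ x y) (hc : γ (u + 2) = γ (u + 1)) (ha : 0 < α 1)
    (hno : ∀ σ, 1 ≤ σ → σ ≤ u + 1 → α (σ + 1) + β (u + 2) ≠ m + α 1 + β σ) :
    Peels u m α β γ x y := by
  have hA := h.zeroA
  refine h.peels_flat hc 0 (u + 2) (u + 2) (min x (1 - min y 1)) (min y 1)
    (fun _ => by simpa [hA] using ha) (by omega) (by omega) (by omega) (by omega)
    (by constructor <;> intros <;> simp only [unitStep] <;> omega) (by omega) ?_ ?_ ?_ ?_ <;>
    try simp only [unitStep]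
  · intro σ h1 h2 h3
    exact absurd h3 (hno σ h1 h2)
  · intro hy σ τ h1 h2
    have := h.double σ τ h1 h2
    omega
  · intro hxy τ h1
    have := h.doubleTop τ (by omega)
    omega
  · intro hxy
    have := h.doubleTop_last
    omega

theorem StripPoint.peels_of_last_cap {u m : ℕ} {α β γ : ℕ → ℕ} {x y : ℕ}
    (h : StripPoint u m α β γ x y) (hc : γ (u + 2) = γ (u + 1)) (ha : 0 < α 1)
    (hlast : α (u + 2) + β (u + 2) = m + α 1 + β (u + 1))
    (hno : ∀ σ, 1 ≤ σ → σ ≤ u → α (σ + 1) + β (u + 2) < m + α 1 + β σ) :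
    Peels u m α β γ x y := by
  have hA := h.zeroA
  have hu := h.width
  have hAu : α (u + 1) < α (u + 1 + 1) := by
    have := hno u hu le_rfl
    have := h.monoB (show u ≤ u + 1 by omega)
    have : α (u + 1 + 1) = α (u + 2) := rfl
    omega
  refine h.peels_flat_of hc 1 (.inl rfl) h.level (unitStep 0 + unitStep (u + 1))
    (unitStep (u + 2)) (unitStep (u + 2)) 0 0
    (dominated_add_unitStep h.monoA (by omega) (by simpa [hA] using ha) hAu)
    (dominated_unitStep h.monoB (by omega)) (dominated_unitStep h.monoC (by omega))
    (by omega) (by omega)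
    (by constructor <;> intros <;> simp only [unitStep, Pi.add_apply] <;> omega) ?_ ?_ ?_ ?_ ?_ <;>
    simp only [unitStep, Pi.add_apply]
  · intro σ τ h1 h2
    have := h.lower σ τ h1 h2
    omega
  · intro σ h1 h2
    have := h.cap h1 h2
    rcases h2.lt_or_eq with h2 | rfl
    · have := hno σ h1 (by omega)
      omega
    · omega
  · intro _ σ τ h1 h2
    have := h.double σ τ h1 h2
    rcases h2.lt_or_eq with h2 | rfl
    · have := hno σ (by omega) (by omega)
      have h3 := h.double (u + 1) τ (by omega) le_rfl
      have : α (u + 1 + 1) = α (u + 2) := rfl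
      omega
    · omega
  · intro _ τ h1
    have := h.doubleTop τ (by omega)
    omega
  · intro _
    have := h.doubleTop_last
    omega

theorem StripPoint.peels_of_slack_top {u m : ℕ} {α β γ : ℕ → ℕ} {x y : ℕ}
    (h : StripPoint u m α β γ x y) (hc : γ (u + 2) = γ (u + 1)) (ha : 0 < α 1)
    (hb : β (u + 1) < β (u + 2))
    (hno : ∀ τ, τ ≤ u → α (u + 2) + x + y + β (τ + 1) + γ (u + 1) < 2 * m + γ τ) :
    Peels u m α β γ x y := by
  have hA := h.zeroA
  refine h.peels_flat hc 0 (u + 1) (u + 2) 0 0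
    (fun _ => by simpa [hA] using ha) (fun _ => hb) (by omega) (by omega) (by omega)
    (by constructor <;> intros <;> simp only [unitStep] <;> omega) (by omega) ?_ ?_ ?_ ?_ <;>
    try simp only [unitStep]
  · intro σ h1 h2 h3
    omega
  · intro hy σ τ h1 h2
    have := h.double σ τ h1 h2
    omega
  · intro hxy τ h1
    have := hno τ h1
    omega
  · intro hxy
    have := h.doubleTop_last
    omega

theorem StripPoint.peels_of_y_pos {u m : ℕ} {α β γ : ℕ → ℕ} {x y : ℕ}
    (h : StripPoint u m α β γ x y) (hc : γ (u + 2) = γ (u + 1)) (ha : 0 < α 1)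
    {σ₀ : ℕ} (h1 : 1 ≤ σ₀) (h2 : σ₀ ≤ u) (hσ : α (σ₀ + 1) + β (u + 2) = m + α 1 + β σ₀)
    (hB : β (u + 2) + y + α 1 ≤ m) (hy : 0 < y) : Peels u m α β γ x y := by
  have hB0 := h.zeroB
  obtain ⟨p, hp1, hp2, hp3, hp4⟩ := exists_first_increase (f := α) (a := 1) (b := σ₀ + 1)
    (by omega) (by omega)
  refine h.peels_flat hc p (u + 2) (u + 2) 0 1 (fun _ => hp3) (by omega) (by omega) (by omega)
    (by omega) (by constructor <;> intros <;> simp only [unitStep] <;> omega) ?_ ?_ ?_ ?_ ?_ <;>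
    try simp only [unitStep]
  · intro σ τ h3 h4 h5
    by_contra! h6
    have := h.monoA (show σ + 1 ≤ p by omega)
    have := h.base h4
    rcases lt_or_ge τ σ₀ with h7 | h7
    · have := h.double σ₀ τ h7 (by omega)
      omega
    · have := h.lower σ₀ τ h7 h4
      have := h.monoB (show σ₀ ≤ u + 2 by omega)
      omega
  · intro σ h3 h4 h5
    by_contra! h6
    have := h.monoA (show σ + 1 ≤ p by omega)
    omega
  · intro _ σ τ h3 h4
    have := h.double σ τ h3 h4
    rcases lt_or_ge σ p with h5 | h5
    · have := h.monoA (show σ + 1 ≤ p by omega)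
      have := h.base (τ := τ) (by omega)
      omega
    · omega
  · intro _ τ h3
    have := h.doubleTop τ (by omega)
    omega
  · intro _
    have := h.doubleTop_last
    omega

theorem StripPoint.peels_of_slack_base {u m : ℕ} {α β γ : ℕ → ℕ} {x : ℕ}
    (h : StripPoint u m α β γ x 0) (hc : γ (u + 2) = γ (u + 1)) (ha : 0 < α 1)
    {σ₀ : ℕ} (h1 : 1 ≤ σ₀) (h2 : σ₀ ≤ u) (hσ : α (σ₀ + 1) + β (u + 2) = m + α 1 + β σ₀)
    (hB : β (u + 2) + α 1 ≤ m) (hx : 0 < x)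
    (hno : ∀ τ, τ ≤ u → α 1 + β (τ + 1) + γ (u + 1) < m + γ τ) : Peels u m α β γ x 0 := by
  have hB0 := h.zeroB
  obtain ⟨p, hp1, hp2, hp3, hp4⟩ := exists_first_increase (f := α) (a := 1) (b := σ₀ + 1)
    (by omega) (by omega)
  refine h.peels_flat hc p (u + 2) (u + 2) 1 0 (fun _ => hp3) (by omega) (by omega) (by omega)
    (by omega) (by constructor <;> intros <;> simp only [unitStep] <;> omega) ?_ ?_ (by omega)
    ?_ ?_ <;> try simp only [unitStep]
  · intro σ τ h3 h4 h5
    by_contra! h6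
    have := h.monoA (show σ + 1 ≤ p by omega)
    have := hno τ h4
    omega
  · intro σ h3 h4 h5
    by_contra! h6
    have := h.monoA (show σ + 1 ≤ p by omega)
    omega
  · intro _ τ h3
    have := h.doubleTop τ (by omega)
    omega
  · intro _
    have := h.doubleTop_last
    omega

/-- The only situation in which two levels have to be removed at once. -/
theorem StripPoint.peels_two {u m : ℕ} {α β γ : ℕ → ℕ} {x : ℕ}
    (h : StripPoint u m α β γ x 0) (hc : γ (u + 2) = γ (u + 1)) (ha : 0 < α 1)
    {s : ℕ} (h1 : 1 ≤ s) (h2 : s ≤ u) (hs : α (s + 1) + β (u + 2) = m + α 1 + β s)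
    (hmin : ∀ σ, 1 ≤ σ → σ < s → α (σ + 1) + β (u + 2) ≠ m + α 1 + β σ)
    (hB : β (u + 2) + α 1 ≤ m) (hx : 0 < x) (hb : β (u + 1) < β (u + 2))
    (hAx : m + α 1 ≤ α (u + 2) + x)
    {t : ℕ} (ht : t ≤ u) (htight : α 1 + β (t + 1) + γ (u + 1) = m + γ t) :
    Peels u m α β γ x 0 := by
  have hA0 := h.zeroA
  have hB0 := h.zeroB
  have hAx' : α (u + 2) + x = m + α 1 := by
    have := h.doubleTop t (by omega)
    omega
  have hAs : α s < α (s + 1) := by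
    rcases h1.lt_or_eq with h3 | rfl
    · have h4 := hmin (s - 1) (by omega) (by omega)
      have h5 := h.cap (σ := s - 1) (by omega) (by omega)
      have := h.monoB (show s - 1 ≤ s by omega)
      rw [Nat.sub_add_cancel (by omega)] at h4 h5
      omega
    · omega
  have hfar : ∀ σ τ, σ < s → s ≤ τ → τ ≤ u →
      α (σ + 1) + β (τ + 1) + γ (u + 1) < m + β σ + γ τ := fun σ τ h3 h4 h5 => by
    have := h.lower s τ h4 h5
    rcases Nat.eq_zero_or_pos σ with rfl | h6
    · have := h.monoB (show s ≤ u + 2 by omega)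
      simp only [zero_add]
      omega
    · have := hmin σ h6 h3
      have := h.cap (σ := σ) h6 (by omega)
      omega
  have hγs : γ t < γ s ∧ t < s := by
    have h3 := hfar 0 s (by omega) le_rfl h2
    rcases lt_or_ge t s with h4 | h4
    · have := h.monoB (show t + 1 ≤ s + 1 by omega)
      simp only [zero_add] at h3
      omega
    · have := hfar 0 t (by omega) h4 ht
      simp only [zero_add] at this
      omega
  obtain ⟨r, hr1, hr2, hr3, hr4⟩ := exists_last_increase h.monoC hγs.2.le hγs.1
  have hm : 2 ≤ m := by
    have := h.monoA (show s + 1 ≤ u + 2 by omega)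
    have := h.monoA h1
    omega
  have hlow : ∀ σ τ, σ ≤ τ → τ ≤ u → α (σ + 1) + β (τ + 1) + γ (u + 1) = m + β σ + γ τ →
      s ≤ σ ∨ τ ≤ r := fun σ τ h3 h4 h5 => by
    by_contra! h6
    rcases lt_or_ge τ s with h7 | h7
    · have := hfar σ s h6.1 le_rfl h2
      have := h.monoC (show r + 1 ≤ τ by omega)
      have := h.monoC h7.le
      have := h.monoB (show τ + 1 ≤ s + 1 by omega)
      omega
    · have := hfar σ τ h6.1 h7 h4
      omega
  refine h.peels_flat_of hc 2 (.inr ⟨rfl, ha⟩) hm (unitStep 0 + unitStep s)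
    (unitStep (u + 1)) (unitStep r) 1 0
    (dominated_add_unitStep h.monoA (by omega) (by simpa [hA0] using ha) hAs)
    (dominated_unitStep h.monoB fun _ => hb) (dominated_unitStep h.monoC fun _ => hr3)
    (by omega) (by omega)
    (by constructor <;> intros <;> simp only [unitStep, Pi.add_apply] <;> omega) ?_ ?_ (by omega)
    ?_ ?_ <;> simp only [unitStep, Pi.add_apply]
  · intro σ τ h3 h4
    have := h.lower σ τ h3 h4
    by_cases h5 : α (σ + 1) + β (τ + 1) + γ (u + 1) = m + β σ + γ τ
    · have := hlow σ τ h3 h4 h5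
      omega
    · omega
  · intro σ h3 h4
    have := h.cap h3 h4
    by_cases h5 : σ < s
    · have := hmin σ h3 h5
      omega
    · omega
  · intro _ τ h3
    have := h.base h3
    have h5 := hlow 0 τ (by omega) h3
    simp only [zero_add] at h5
    omega
  · intro _
    have := h.doubleTop_last
    omega

theorem StripPoint.peels_of_cornerA {u m : ℕ} {α β γ : ℕ → ℕ} {x y : ℕ}
    (h : StripPoint u m α β γ x y) (hc : γ (u + 2) = γ (u + 1)) (ha : 0 < α 1) :
    Peels u m α β γ x y := by
  classical
  have hu := h.width
  by_cases hno : ∀ σ, 1 ≤ σ → σ ≤ u + 1 → α (σ + 1) + β (u + 2) ≠ m + α 1 + β σ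
  · exact h.peels_of_no_cap hc ha hno
  push Not at hno
  have hcap_lt : (∀ σ, 1 ≤ σ → σ ≤ u → α (σ + 1) + β (u + 2) ≠ m + α 1 + β σ) →
      Peels u m α β γ x y := fun hne => by
    obtain ⟨σ, h1, h2, h3⟩ := hno
    rcases h2.lt_or_eq with h2 | rfl
    · exact absurd h3 (hne σ h1 (by omega))
    · refine h.peels_of_last_cap hc ha h3 fun σ h4 h5 => lt_of_le_of_ne ?_ (hne σ h4 h5)
      have := h.cap h4 (by omega)
      omega
  by_cases hb : β (u + 2) = β (u + 1)
  · refine hcap_lt fun σ h1 h2 h3 => ?_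
    have := h.lower σ u h2 le_rfl
    have := h.monoC (show u ≤ u + 1 by omega)
    omega
  have hb' : β (u + 1) < β (u + 2) :=
    lt_of_le_of_ne (h.monoB (by omega)) (Ne.symm hb)
  by_cases htop : ∀ τ, τ ≤ u → α (u + 2) + x + y + β (τ + 1) + γ (u + 1) < 2 * m + γ τ
  · exact h.peels_of_slack_top hc ha hb' htop
  push Not at htop
  obtain ⟨τ₀, hτ, hτt⟩ := htop
  by_cases hσ : ∀ σ, 1 ≤ σ → σ ≤ u → α (σ + 1) + β (u + 2) ≠ m + α 1 + β σ
  · exact hcap_lt hσ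
  push Not at hσ
  have h0 := Nat.find_spec hσ
  have hmin : ∀ σ, 1 ≤ σ → σ < Nat.find hσ → α (σ + 1) + β (u + 2) ≠ m + α 1 + β σ :=
    fun σ h1 h2 h3 => Nat.find_min hσ h2 ⟨h1, by omega, h3⟩
  generalize Nat.find hσ = s at h0 hmin
  obtain ⟨h1, h2, h3⟩ := h0
  have hlast := h.doubleTop_last
  have hts : τ₀ < s := by
    by_contra! h4
    have := h.lower s τ₀ h4 hτ
    omega
  have hAx := h.double s τ₀ hts (by omega)
  have hcl := h.cap_last
  rcases Nat.eq_zero_or_pos y with rfl | hy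
  · by_cases hP : ∀ τ, τ ≤ u → α 1 + β (τ + 1) + γ (u + 1) < m + γ τ
    · exact h.peels_of_slack_base hc ha h1 h2 h3 (by omega) (by omega) hP
    · push Not at hP
      obtain ⟨t, ht, htt⟩ := hP
      have := h.base ht
      exact h.peels_two hc ha h1 h2 h3 hmin (by omega) (by omega) hb' (by omega) ht (by omega)
  · exact h.peels_of_y_pos hc ha h1 h2 h3 (by omega) hy

theorem StripPoint.peels_of_slack {u m : ℕ} {α β γ : ℕ → ℕ} {x y : ℕ}
    (h : StripPoint u m α β γ x y) (hc : γ (u + 2) = γ (u + 1)) (ha : α 1 = 0)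
    (hP : ∀ σ τ, σ ≤ τ → τ ≤ u → α (σ + 1) + β (τ + 1) + γ (u + 1) ≠ m + β σ + γ τ)
    (hQ : ∀ σ, 1 ≤ σ → σ ≤ u + 1 → α (σ + 1) + β (u + 2) ≠ m + β σ) :
    Peels u m α β γ x y := by
  refine h.peels_flat hc (u + 2) (u + 2) (u + 2) (min x (2 - min y 2)) (min y 2)
    (by omega) (by omega) (by omega) (by omega) (by omega)
    (by constructor <;> intros <;> simp only [unitStep] <;> omega)
    (fun σ τ h1 h2 h3 => absurd h3 (hP σ τ h1 h2))
    (fun σ h1 h2 h3 => absurd h3 (by simpa [ha] using hQ σ h1 h2)) ?_ ?_ ?_ <;>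
    simp only [unitStep]
  · intro hy σ τ h1 h2
    have := h.double σ τ h1 h2
    omega
  · intro hxy τ h1
    have := h.doubleTop τ (by omega)
    omega
  · intro hxy
    have := h.doubleTop_last
    omega

theorem StripPoint.peels_of_full_row {u m : ℕ} {α β γ : ℕ → ℕ} {x y : ℕ}
    (h : StripPoint u m α β γ x y) (hc : γ (u + 2) = γ (u + 1)) (ha : α 1 = 0)
    (hP : ∀ τ, τ ≤ u → β (τ + 1) + γ (u + 1) < m + γ τ) (hfull : β (u + 2) = m + β 1) :
    Peels u m α β γ x y := by
  have hPu := hP u le_rfl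
  have hCu := h.monoC (show u ≤ u + 1 by omega)
  have hB0 := h.zeroB
  have hcl := h.cap_last
  have hlast := h.doubleTop_last
  refine h.peels_flat hc (u + 2) (u + 1) (u + 2) (min x (1 - min y 1)) (min y 1)
    (by omega) (fun _ => show β (u + 1) < β (u + 2) by omega) (by omega) (by omega) (by omega)
    (by constructor <;> intros <;> simp only [unitStep] <;> omega) ?_ (by omega) ?_ ?_ ?_ <;>
    try simp only [unitStep]
  · intro σ τ h1 h2 h3
    have := hP τ h2
    rcases Nat.eq_zero_or_pos σ with rfl | h4
    · simp only [zero_add] at h3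
      omega
    · have := h.cap h4 (by omega)
      omega
  · intro hy σ τ h1 h2
    have := h.double σ τ h1 h2
    omega
  · intro hxy τ h1
    have := hP τ h1
    omega
  · intro hxy
    omega

theorem StripPoint.peels_of_slack_base_flat {u m : ℕ} {α β γ : ℕ → ℕ} {x y : ℕ}
    (h : StripPoint u m α β γ x y) (hc : γ (u + 2) = γ (u + 1)) (ha : α 1 = 0)
    (hP : ∀ τ, τ ≤ u → β (τ + 1) + γ (u + 1) < m + γ τ) (hfull : β (u + 2) < m + β 1)
    (htight : (∃ σ τ, σ ≤ τ ∧ τ ≤ u ∧ α (σ + 1) + β (τ + 1) + γ (u + 1) = m + β σ + γ τ) ∨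
      ∃ σ, 1 ≤ σ ∧ σ ≤ u + 1 ∧ α (σ + 1) + β (u + 2) = m + β σ) :
    Peels u m α β γ x y := by
  have hB0 := h.zeroB
  obtain ⟨s, hs1, hs2, hs3, hs4⟩ : ∃ s, 1 ≤ s ∧ s ≤ u + 1 ∧ 0 < α (s + 1) ∧
      ∀ σ, 1 ≤ σ → σ < s → α (σ + 1) = 0 →
        β (u + 2) + β s < α (s + 1) + β (u + 2) + β σ := by
    rcases htight with ⟨s, t, h1, h2, h3⟩ | ⟨s, h1, h2, h3⟩
    · have h4 := hP t h2
      have h5 : 0 < α (s + 1) := by omega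
      have h6 : 1 ≤ s := by
        by_contra! h7
        obtain rfl : s = 0 := by omega
        simp only [zero_add] at h5
        omega
      exact ⟨s, h6, by omega, h5, fun σ h7 h8 h9 => by omega⟩
    · have := h.monoB h1
      exact ⟨s, h1, h2, by omega, fun σ h7 h8 h9 => by
        have := h.monoB h7
        omega⟩
  obtain ⟨p, hp1, hp2, hp3, hp4⟩ := exists_first_increase (f := α) (a := 1) (b := s + 1)
    (by omega) (by omega)
  have hpz : ∀ σ, σ < p → α (σ + 1) = 0 := fun σ h1 => by
    have := h.monoA (show σ + 1 ≤ p by omega)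
    omega
  refine h.peels_flat hc p (u + 2) (u + 2) (min x (1 - min y 1)) (min y 1)
    (fun _ => hp3) (by omega) (by omega) (by omega) (by omega)
    (by constructor <;> intros <;> simp only [unitStep] <;> omega) ?_ ?_ ?_ ?_ ?_ <;>
    try simp only [unitStep]
  · intro σ τ h1 h2 h3
    by_contra! h4
    have := hpz σ h4.1
    have := hP τ h2
    omega
  · intro σ h1 h2 h3
    by_contra! h4
    have := hpz σ (h4.1 hp1)
    have := h.monoB h1
    omega
  · intro hy σ τ h1 h2
    have := h.double σ τ h1 h2
    rcases lt_or_ge σ p with h3 | h3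
    · have := hpz σ h3
      have := hs4 σ (by omega) (by omega) this
      have := h.double s τ (by omega) hs2
      omega
    · omega
  · intro hxy τ h1
    have := h.doubleTop τ (by omega)
    omega
  · intro hxy
    have := h.doubleTop_last
    omega

theorem StripPoint.peels_of_slack_cap_flat {u m : ℕ} {α β γ : ℕ → ℕ} {x y : ℕ}
    (h : StripPoint u m α β γ x y) (hc : γ (u + 2) = γ (u + 1)) (ha : α 1 = 0)
    {t : ℕ} (ht : t ≤ u) (htight : β (t + 1) + γ (u + 1) = m + γ t)
    (hQ : ∀ σ, 1 ≤ σ → σ ≤ u + 1 → α (σ + 1) + β (u + 2) ≠ m + β σ) :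
    Peels u m α β γ x y := by
  have hB0 := h.zeroB
  have hQ' : ∀ σ, 1 ≤ σ → σ ≤ u + 1 → α (σ + 1) + β (u + 2) < m + β σ := fun σ h1 h2 => by
    have := h.cap h1 h2
    have := hQ σ h1 h2
    omega
  have hQlast : α (u + 2) + β (u + 2) < m + β (u + 1) := hQ' (u + 1) (by omega) le_rfl
  by_cases hfull : m ≤ β (u + 2)
  · refine h.peels_flat hc (u + 2) 0 (u + 2) (min x (1 - min y 1)) (min y 1)
      (by omega) (fun _ => ?_) (by omega) (by omega) (by omega)
      (by constructor <;> intros <;> simp only [unitStep] <;> omega) ?_ ?_ ?_ ?_ ?_ <;>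
      try simp only [unitStep]
    · have := hQ' 1 le_rfl (by omega)
      simp only [zero_add]
      omega
    · intro σ τ h1 h2 h3
      by_contra! h4
      have := hQ' σ (by omega) (by omega)
      have := h.base h2
      omega
    · intro σ h1 h2 h3
      have := hQ' σ h1 h2
      omega
    · intro hy σ τ h1 h2
      have := h.double σ τ h1 h2
      omega
    · intro hxy τ h1
      have := h.doubleTop τ (by omega)
      omega
    · intro hxy
      have := h.doubleTop_last
      omega
  · have hB : ∀ τ, τ ≤ u → β (τ + 1) < m := fun τ h1 => by
      have := h.monoB (show τ + 1 ≤ u + 2 by omega)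
      omega
    obtain ⟨r, hr1, hr2, hr3, hr4⟩ := exists_last_increase h.monoC
      (show t ≤ u + 1 by omega) (by have := hB t ht; omega)
    have hrz : ∀ τ, r < τ → τ ≤ u → γ τ = γ (u + 1) := fun τ h1 h2 => by
      have := h.monoC (show r + 1 ≤ τ by omega)
      have := h.monoC (show τ ≤ u + 1 by omega)
      omega
    refine h.peels_flat hc (u + 2) (u + 2) r (min x (1 - min y 1)) (min y 1)
      (by omega) (by omega) (fun _ => hr3) (by omega) (by omega)
      (by constructor <;> intros <;> simp only [unitStep] <;> omega) ?_ ?_ ?_ ?_ ?_ <;>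
      try simp only [unitStep]
    · intro σ τ h1 h2 h3
      by_contra! h4
      have h5 := hrz τ (by omega) h2
      have h6 := hB τ h2
      rcases Nat.eq_zero_or_pos σ with rfl | h7
      · simp only [zero_add] at h3
        omega
      · have := hQ' σ h7 (by omega)
        have := h.monoB (show τ + 1 ≤ u + 2 by omega)
        omega
    · intro σ h1 h2 h3
      have := hQ' σ h1 h2
      omega
    · intro hy σ τ h1 h2
      have := h.double σ τ h1 h2
      rcases lt_or_ge r τ with h3 | h3
      · have := hrz τ h3 (by omega)
        have := hB τ (by omega)
        have := h.double σ t (by omega) h2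
        omega
      · omega
    · intro hxy τ h1
      have := h.doubleTop τ (by omega)
      rcases lt_or_ge r τ with h3 | h3
      · have := hrz τ h3 (by omega)
        have := hB τ (by omega)
        have := h.doubleTop t (by omega)
        omega
      · omega
    · intro hxy
      have := h.doubleTop t (by omega)
      omega

theorem StripPoint.peels_of_y_pos_flat {u m : ℕ} {α β γ : ℕ → ℕ} {x y : ℕ}
    (h : StripPoint u m α β γ x y) (hc : γ (u + 2) = γ (u + 1)) (ha : α 1 = 0) (hy : 0 < y)
    {t : ℕ} (ht : t ≤ u) (htight : β (t + 1) + γ (u + 1) = m + γ t)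
    (htmin : ∀ τ, τ < t → β (τ + 1) + γ (u + 1) ≠ m + γ τ)
    {s : ℕ} (hs1 : 1 ≤ s) (hs2 : s ≤ u + 1) (hs : α (s + 1) + β (u + 2) = m + β s)
    (hsmax : ∀ σ, s < σ → σ ≤ u + 1 → α (σ + 1) + β (u + 2) ≠ m + β σ) :
    Peels u m α β γ x y := by
  have hB0 := h.zeroB
  have hst : s ≤ t := by
    by_contra! h1
    have := h.double s t h1 hs2
    omega
  have hlow : ∀ τ, τ < t → β (τ + 1) + γ (u + 1) < m + γ τ := fun τ h1 => by
    have := h.base (τ := τ) (by omega)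
    have := htmin τ h1
    omega
  have hcap : ∀ σ, s < σ → σ ≤ u + 1 → α (σ + 1) + β (u + 2) < m + β σ := fun σ h1 h2 => by
    have := h.cap (σ := σ) (by omega) h2
    have := hsmax σ h1 h2
    omega
  have hpred := hlow (s - 1) (by omega)
  rw [Nat.sub_add_cancel hs1] at hpred
  have hCpred := h.monoC (show s - 1 ≤ t by omega)
  obtain ⟨q, hq1, hq2, hq3, hq4⟩ := exists_first_increase (f := β) (a := s) (b := t + 1)
    (by omega) (by omega)
  have hfull := h.lower s t hst ht
  refine h.peels_flat hc (u + 2) q (u + 2) 0 1 (by omega) (fun _ => hq3) (by omega) (by omega)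
    (by omega) (by constructor <;> intros <;> simp only [unitStep] <;> omega) ?_ ?_ ?_ ?_ ?_ <;>
    try simp only [unitStep]
  · intro σ τ h1 h2 h3
    have h4 : σ ≤ s := by
      by_contra! h4
      have := hcap σ h4 (by omega)
      have := h.lower s τ (by omega) h2
      omega
    have h5 : t ≤ τ := by
      by_contra! h5
      have := hlow τ h5
      have := h.lower σ t (by omega) ht
      omega
    omega
  · intro σ h1 h2 h3
    by_contra! h4
    have := hcap σ (by omega) h2
    omega
  · intro _ σ τ h1 h2
    have h3 := h.double σ τ h1 h2
    by_cases h4 : σ ≤ q ∨ q ≤ τ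
    · omega
    push Not at h4
    have h5 := hcap σ (by omega) h2
    rcases lt_or_ge τ s with h6 | h6
    · have := h.double s τ h6 hs2
      omega
    · have := h.double s (s - 1) (by omega) hs2
      rw [Nat.sub_add_cancel hs1] at this
      have := h.monoB (show τ + 1 ≤ q by omega)
      have := h.monoC (show s - 1 ≤ τ by omega)
      omega
  · intro _ τ h1
    have := h.doubleTop τ (by omega)
    have := h.doubleTop_last
    rcases lt_or_ge τ q with h2 | h2
    · have := hlow τ (by omega)
      omega
    · omega
  · intro _
    have := h.doubleTop_last
    omega

theorem StripPoint.peels_of_B_pos {u m : ℕ} {α β γ : ℕ → ℕ} {x : ℕ}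
    (h : StripPoint u m α β γ x 0) (hc : γ (u + 2) = γ (u + 1)) (ha : α 1 = 0) (hb : 0 < β 1)
    {s : ℕ} (hs1 : 1 ≤ s) (hs2 : s ≤ u + 1) (hs : α (s + 1) + β (u + 2) = m + β s) :
    Peels u m α β γ x 0 := by
  have hB0 := h.zeroB
  have hlast := h.doubleTop_last
  by_cases hfull : β (u + 2) = m + β 1
  · have hbu := h.base (τ := u) le_rfl
    have hCu := h.monoC (show u ≤ u + 1 by omega)
    refine h.peels_flat_of hc 1 (.inl rfl) h.level (unitStep (u + 2))
      (unitStep 0 + unitStep (u + 1)) (unitStep (u + 2)) 0 0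
      (dominated_unitStep h.monoA (by omega))
      (dominated_add_unitStep h.monoB (by omega) (by simpa [hB0] using hb)
        (show β (u + 1) < β (u + 2) by omega)) (dominated_unitStep h.monoC (by omega))
      (by omega) (by omega)
      (by constructor <;> intros <;> simp only [unitStep, Pi.add_apply] <;> omega)
      ?_ ?_ (by omega) ?_ ?_ <;> simp only [unitStep, Pi.add_apply]
    · intro σ τ h1 h2
      have := h.lower σ τ h1 h2
      rcases Nat.eq_zero_or_pos σ with rfl | h3
      · omega
      · have := h.cap h3 (by omega)
        have := h.base h2
        omega
    · intro σ h1 h2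
      have := h.cap h1 h2
      omega
    · intro _ τ h1
      have := h.base h1
      omega
    · intro _
      omega
  · have h1 := h.cap (σ := 1) le_rfl (by omega)
    have h2 := h.monoB hs1
    obtain ⟨p, hp1, hp2, hp3, hp4⟩ := exists_first_increase (f := α) (a := 1) (b := s + 1)
      (by omega) (by omega)
    have hpz : ∀ σ, σ < p → α (σ + 1) = 0 := fun σ h1 => by
      have := h.monoA (show σ + 1 ≤ p by omega)
      omega
    refine h.peels_flat hc p 0 (u + 2) 0 0 (fun _ => hp3) (fun _ => by simpa [hB0] using hb)
      (by omega) (by omega) (by omega)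
      (by constructor <;> intros <;> simp only [unitStep] <;> omega) ?_ ?_ (by omega) ?_ ?_ <;>
      try simp only [unitStep]
    · intro σ τ h1 h2 h3
      by_contra! h4
      have := hpz σ h4.1
      have := h.base h2
      have := h.monoB (show 1 ≤ σ by omega)
      omega
    · intro σ h1 h2 h3
      by_contra! h4
      have := hpz σ (h4.1 hp1)
      have := h.monoB h1
      omega
    · intro _ τ h1
      have := h.doubleTop τ (by omega)
      omega
    · intro _
      omega

theorem strip_unitStep_antichain {u p q r x : ℕ} (hq : q < p ∨ q = u + 2)
    (hr : r < p ∧ r < q ∧ r ≤ u ∨ r = u + 2) (hx : x = 0 ∨ x = 1 ∧ p = u + 2) :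
    Strip u 1 (unitStep p) (unitStep q) (unitStep r) x 0 := by
  constructor <;> intros <;> simp only [unitStep] <;> omega

theorem exists_first_support {f : ℕ → ℕ} (hf : Monotone f) {a b : ℕ} (hab : a ≤ b)
    (ha : f a = 0) : ∃ p, a ≤ p ∧ p ≤ b ∧ (∀ k, k ≤ p → f k = 0) ∧ (p < b → 0 < f (p + 1)) := by
  rcases Nat.eq_zero_or_pos (f b) with h | h
  · refine ⟨b, hab, le_rfl, fun k hk => ?_, by omega⟩
    have := hf hk
    omega
  · obtain ⟨p, h1, h2, h3, h4⟩ := exists_first_increase hab (by omega : f a < f b)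
    refine ⟨p, h1, h2.le, fun k hk => ?_, by omega⟩
    have := hf hk
    omega

theorem StripPoint.peels_of_B_zero {u m : ℕ} {α β γ : ℕ → ℕ} {x : ℕ}
    (h : StripPoint u m α β γ x 0) (hc : γ (u + 2) = γ (u + 1)) (ha : α 1 = 0) (hb : β 1 = 0)
    {t : ℕ} (ht : t ≤ u) (htight : β (t + 1) + γ (u + 1) = m + γ t) :
    Peels u m α β γ x 0 := by
  have hm := h.level
  have hAx := h.doubleTop t (by omega)
  obtain ⟨p, x', hp1, hpz, hpp, hx, hx', hAx'⟩ : ∃ p x', 1 ≤ p ∧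
      (∀ σ, σ < p → σ ≤ u + 1 → α (σ + 1) = 0) ∧ (p ≤ u + 1 → α p < α (p + 1)) ∧
      x' ≤ x ∧ (x' = 0 ∨ x' = 1 ∧ p = u + 2) ∧
      (α (u + 2) + x = 0 ∨ p ≤ u + 1 ∨ p = u + 2 ∧ x' = 1) := by
    obtain ⟨p, h1, h2, h3, h4⟩ := exists_first_support h.monoA (show 1 ≤ u + 2 by omega) ha
    rcases h2.lt_or_eq with h2 | rfl
    · have := h3 p le_rfl
      exact ⟨p, 0, h1, fun σ h5 _ => h3 _ h5, by omega, by omega, by omega, by omega⟩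
    · have := h3 _ le_rfl
      exact ⟨u + 2, min x 1, h1, fun σ h5 _ => h3 _ h5, by omega, by omega, by omega, by omega⟩
  obtain ⟨q, hq1, hq2, hqz, hqp⟩ := exists_first_support h.monoB (show 1 ≤ u + 2 by omega) hb
  obtain ⟨r, -, hr2, hrz, hrp⟩ :=
    exists_first_support h.monoC (show 0 ≤ u + 1 by omega) h.zeroC
  obtain ⟨q', hq'⟩ : ∃ q', q < p ∧ q' = q ∨ p ≤ q ∧ q' = u + 2 := by
    rcases lt_or_ge q p with h1 | h1
    · exact ⟨q, by omega⟩
    · exact ⟨u + 2, by omega⟩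
  obtain ⟨r', hr'⟩ : ∃ r', r < p ∧ r < q ∧ r ≤ u ∧ r' = r ∨
      (p ≤ r ∨ q ≤ r ∨ r = u + 1) ∧ r' = u + 2 := by
    by_cases h1 : r < p ∧ r < q ∧ r ≤ u
    · exact ⟨r, by omega⟩
    · exact ⟨u + 2, by omega⟩
  have hcapp : p ≤ u + 1 → p ≤ q → β (u + 2) < m := fun h1 h2 => by
    have := h.cap hp1 h1
    have := hqz p h2
    have := hpp h1
    omega
  have hbase : ∀ τ, τ ≤ u → β (τ + 1) + γ (u + 1) = m + γ τ →
      (q < p ∧ q ≤ τ) ∨ (τ ≤ r ∧ r < p ∧ r < q ∧ r ≤ u) := fun τ h1 h2 => by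
    rcases le_or_gt q τ with h3 | h3
    · refine .inl ⟨?_, h3⟩
      by_contra! h4
      have := h.lower p τ (by omega) h1
      have := hqz p h4
      have := hpp (by omega)
      omega
    · have h4 := hqz (τ + 1) h3
      have h5 : r ≤ u := by
        by_contra! h6
        have := hrz (u + 1) h6
        omega
      have h6 := hrp (by omega)
      have h7 : τ ≤ r := by
        by_contra! h8
        have := h.base h5
        have := h.monoC (show r + 1 ≤ τ by omega)
        have := hrz r le_rfl
        omega
      have h8 := hrz τ h7
      refine .inr ⟨h7, ?_, ?_, h5⟩ <;> by_contra! h9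
      · have := h.lower p p le_rfl (by omega)
        have := h.monoB (show p ≤ p + 1 by omega)
        have := hrz p h9
        have := hpp (by omega)
        omega
      · have := h.base (τ := q) (by omega)
        have := hrz q h9
        have := hqp (by omega)
        omega
  have hcap : 0 < β (u + 2) → q ≤ u + 1 := fun h1 => by
    by_contra! h2
    have := hqz (u + 2) (by omega)
    omega
  have htop : α (u + 2) + x + 1 ≤ m + (unitStep p (u + 2) + x') := by
    clear hq' hr'
    simp only [unitStep]
    omega
  have hB1 := h.cap (σ := 1) le_rfl (by omega)
  refine h.peels_flat hc p q' r' x' 0 hpp (fun _ => ?_) (fun _ => ?_) hx le_rfl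
    (strip_unitStep_antichain (by omega) (by omega) hx') ?_ ?_ (by omega) ?_ ?_
  · obtain rfl : q' = q := by omega
    have := hqz q' le_rfl
    omega
  · obtain rfl : r' = r := by omega
    have := hrz r' le_rfl
    omega
  · intro σ τ h1 h2 h3
    by_contra! h4
    have h5 := hpz σ h4.1 (by omega)
    have h6 := h.base h2
    have h7 := hbase τ h2 (by omega)
    by_cases h8 : q < σ
    · have := hqp (by omega)
      have := h.monoB (show q + 1 ≤ σ from h8)
      omega
    · omega
  · intro σ h1 h2 h3
    by_contra! h4
    have h5 := hpz σ (h4.1 hp1) h2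
    have h6 := hcap (by omega)
    rcases hq' with h7 | h7
    · have := h.monoB (show q + 1 ≤ σ by omega)
      omega
    · have := hcapp (by omega) h7.1
      omega
  · intro _ τ h1
    have h2 : β (τ + 1) + γ (u + 1) + (1 + unitStep r' τ) ≤
        m + γ τ + (unitStep q' (τ + 1) + unitStep r' (u + 1)) := by
      have h3 := h.base h1
      have h4 := hbase τ h1
      clear hAx htop hAx' hx' hB1
      by_cases h5 : β (τ + 1) + γ (u + 1) = m + γ τ
      · simp only [unitStep]
        rcases h4 h5 with h6 | h6
        · obtain rfl : q' = q := by omega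
          omega
        · obtain rfl : r' = r := by omega
          omega
      · have : unitStep r' τ ≤ unitStep r' (u + 1) := by
          simp only [unitStep]
          omega
        omega
    clear hq' hr' hx' hAx'
    omega
  · intro _
    have h2 : β (u + 2) + 1 ≤ m + unitStep q' (u + 2) := by
      clear hAx htop hAx' hx' hr'
      rcases hq' with h1 | ⟨h1, -⟩
      · obtain rfl : q' = q := by omega
        simp only [unitStep]
        rcases Nat.eq_zero_or_pos (β (u + 2)) with h3 | h3
        · omega
        · have := hcap h3
          omega
      · rcases Nat.eq_zero_or_pos (β (u + 2)) with h3 | h3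
        · omega
        · have := hcap h3
          have := hcapp (by omega) h1
          omega
    clear hq' hr' hx' hAx'
    omega

theorem StripPoint.peels_of_flat {u m : ℕ} {α β γ : ℕ → ℕ} {x y : ℕ}
    (h : StripPoint u m α β γ x y) (hc : γ (u + 2) = γ (u + 1)) (ha : α 1 = 0) :
    Peels u m α β γ x y := by
  classical
  by_cases hP : ∃ τ, τ ≤ u ∧ β (τ + 1) + γ (u + 1) = m + γ τ
  · by_cases hQ : ∃ k, k ≤ u ∧ α (u + 1 - k + 1) + β (u + 2) = m + β (u + 1 - k)
    · obtain ⟨ht, htight⟩ := Nat.find_spec hP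
      obtain ⟨hs, hstight⟩ := Nat.find_spec hQ
      rcases Nat.eq_zero_or_pos y with rfl | hy
      · rcases Nat.eq_zero_or_pos (β 1) with hb | hb
        · exact h.peels_of_B_zero hc ha hb ht htight
        · exact h.peels_of_B_pos hc ha hb (by omega) (by omega) hstight
      · refine h.peels_of_y_pos_flat hc ha hy ht htight
          (fun τ h1 h2 => Nat.find_min hP h1 ⟨by omega, h2⟩) (by omega) (by omega) hstight
          fun σ h1 h2 h3 => Nat.find_min hQ (m := u + 1 - σ) (by omega) ⟨by omega, ?_⟩
        rwa [show u + 1 - (u + 1 - σ) = σ by omega]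
    · push Not at hQ
      obtain ⟨t, ht, htight⟩ := hP
      refine h.peels_of_slack_cap_flat hc ha ht htight fun σ h1 h2 => ?_
      have := hQ (u + 1 - σ) (by omega)
      rwa [show u + 1 - (u + 1 - σ) = σ by omega] at this
  · push Not at hP
    have hP' : ∀ τ, τ ≤ u → β (τ + 1) + γ (u + 1) < m + γ τ := fun τ h1 => by
      have := h.base h1
      have := hP τ h1
      omega
    by_cases htight :
        (∃ σ τ, σ ≤ τ ∧ τ ≤ u ∧ α (σ + 1) + β (τ + 1) + γ (u + 1) = m + β σ + γ τ) ∨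
        ∃ σ, 1 ≤ σ ∧ σ ≤ u + 1 ∧ α (σ + 1) + β (u + 2) = m + β σ
    · have := h.cap (σ := 1) le_rfl (by omega)
      rcases (show β (u + 2) ≤ m + β 1 by omega).lt_or_eq with hfull | hfull
      · exact h.peels_of_slack_base_flat hc ha hP' hfull htight
      · exact h.peels_of_full_row hc ha hP' hfull
    · push Not at htight
      exact h.peels_of_slack hc ha htight.1 htight.2

/-- Every point of a strip of positive level splits off a point of level one or two. -/
theorem StripPoint.peels_all {u m : ℕ} {α β γ : ℕ → ℕ} {x y : ℕ}
    (h : StripPoint u m α β γ x y) : Peels u m α β γ x y := by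
  rcases (h.monoC (show u + 1 ≤ u + 2 by omega)).lt_or_eq with hc | hc
  · rcases Nat.eq_zero_or_pos (α 1) with ha | ha
    · exact h.peels_of_cornerC ha hc
    · exact h.peels_of_corners ha hc
  · rcases Nat.eq_zero_or_pos (α 1) with ha | ha
    · exact h.peels_of_flat hc.symm ha
    · exact h.peels_of_cornerA hc.symm ha

/-- A lattice path from `a` to `b`. -/
structure IsPath (a b : ℕ × ℕ) (L : List (ℕ × ℕ)) : Prop where
  chain : L.IsChain RootStep
  head : L.head? = some a
  last : L.getLast? = some b

/-- The horizontal path from `(p, a)` to `(p, b)`. -/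
def rowPath (p a b : ℕ) : List (ℕ × ℕ) := (List.range' a (b + 1 - a)).map (Prod.mk p)

theorem rowPath_self (p a : ℕ) : rowPath p a a = [(p, a)] := by
  simp [rowPath]

theorem rowPath_cons {p a b : ℕ} (h : a ≤ b) :
    rowPath p a b = (p, a) :: rowPath p (a + 1) b := by
  obtain ⟨k, rfl⟩ := Nat.exists_eq_add_of_le h
  simp [rowPath, show a + k + 1 - a = k + 1 by omega, show a + k + 1 - (a + 1) = k by omega,
    List.range'_succ]

theorem mem_rowPath {p a b : ℕ} {c : ℕ × ℕ} :
    c ∈ rowPath p a b ↔ c.1 = p ∧ a ≤ c.2 ∧ c.2 ≤ b := by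
  obtain ⟨c1, c2⟩ := c
  simp only [rowPath, List.mem_map, List.mem_range'_1, Prod.mk.injEq]
  constructor
  · rintro ⟨d, hd, rfl, rfl⟩
    omega
  · rintro ⟨rfl, h1, h2⟩
    exact ⟨c2, by omega, rfl, rfl⟩

theorem IsPath.ne_nil {a b : ℕ × ℕ} {L : List (ℕ × ℕ)} (h : IsPath a b L) : L ≠ [] := by
  rintro rfl
  simpa using h.head

theorem IsPath.cons {a b c : ℕ × ℕ} {L : List (ℕ × ℕ)} (h : IsPath a b L)
    (hc : RootStep c a) : IsPath c b (c :: L) := by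
  obtain ⟨h1, h2, h3⟩ := h
  cases L with
  | nil => simp at h2
  | cons d L =>
    obtain rfl : d = a := by simpa using h2
    exact ⟨List.isChain_cons_cons.2 ⟨hc, h1⟩, rfl, by simpa [List.getLast?_cons_cons] using h3⟩

theorem isPath_rowPath {p a b : ℕ} (h : a ≤ b) : IsPath (p, a) (p, b) (rowPath p a b) := by
  induction h using Nat.decreasingInduction with
  | self => exact rowPath_self p b ▸ ⟨List.isChain_singleton _, rfl, rfl⟩
  | of_succ k hk ih =>
    rw [rowPath_cons hk.le]
    exact ih.cons (.inl ⟨rfl, rfl⟩)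

theorem IsPath.row_append {p a b : ℕ} (h : a ≤ b) {c : ℕ × ℕ} {L : List (ℕ × ℕ)}
    (hL : IsPath (p + 1, b) c L) : IsPath (p, a) c (rowPath p a b ++ L) := by
  induction h using Nat.decreasingInduction with
  | self => exact rowPath_self p b ▸ hL.cons (.inr ⟨rfl, rfl⟩)
  | of_succ k hk ih =>
    rw [rowPath_cons hk.le]
    exact ih.cons (.inl ⟨rfl, rfl⟩)

theorem IsPath.le {p a p' b : ℕ} {L : List (ℕ × ℕ)} (h : IsPath (p, a) (p', b) L) :
    p ≤ p' ∧ a ≤ b := by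
  obtain ⟨h1, h2, h3⟩ := h
  induction L generalizing p a with
  | nil => simp at h2
  | cons c L ih =>
    obtain rfl : c = (p, a) := by simpa using h2
    cases L with
    | nil =>
      simp at h3
      omega
    | cons d L =>
      obtain ⟨hd, h1⟩ := List.isChain_cons_cons.1 h1
      obtain ⟨d1, d2⟩ := d
      have := ih h1 rfl (by simpa [List.getLast?_cons_cons] using h3)
      simp only [RootStep] at hd
      omega

theorem IsPath.eq_rowPath {p a b : ℕ} {L : List (ℕ × ℕ)} (h : IsPath (p, a) (p, b) L) :
    L = rowPath p a b := by
  obtain ⟨h1, h2, h3⟩ := h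
  induction L generalizing a with
  | nil => simp at h2
  | cons c L ih =>
    obtain rfl : c = (p, a) := by simpa using h2
    cases L with
    | nil =>
      obtain rfl : a = b := by simpa using h3
      exact (rowPath_self p a).symm
    | cons d L =>
      obtain ⟨hd, h1'⟩ := List.isChain_cons_cons.1 h1
      obtain ⟨d1, d2⟩ := d
      have h3' : ((d1, d2) :: L).getLast? = some (p, b) := by
        simpa [List.getLast?_cons_cons] using h3
      have h4 := IsPath.le ⟨h1', rfl, h3'⟩
      simp only [RootStep] at hd
      obtain ⟨rfl, rfl⟩ : d1 = p ∧ d2 = a + 1 := by omega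
      rw [ih h1' rfl h3', ← rowPath_cons (by omega)]

theorem IsPath.exists_split {p a p' b : ℕ} {L : List (ℕ × ℕ)} (h : IsPath (p, a) (p', b) L)
    (hp : p < p') : ∃ c L', a ≤ c ∧ c ≤ b ∧ L = rowPath p a c ++ L' ∧
      IsPath (p + 1, c) (p', b) L' := by
  obtain ⟨h1, h2, h3⟩ := h
  induction L generalizing a with
  | nil => simp at h2
  | cons c L ih =>
    obtain rfl : c = (p, a) := by simpa using h2
    cases L with
    | nil =>
      simp at h3
      omega
    | cons d L =>
      obtain ⟨hd, h1'⟩ := List.isChain_cons_cons.1 h1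
      obtain ⟨d1, d2⟩ := d
      have h3' : ((d1, d2) :: L).getLast? = some (p', b) := by
        simpa [List.getLast?_cons_cons] using h3
      have h4 : IsPath (d1, d2) (p', b) ((d1, d2) :: L) := ⟨h1', rfl, h3'⟩
      have h5 := h4.le
      simp only [RootStep] at hd
      rcases hd with ⟨rfl, rfl⟩ | ⟨rfl, rfl⟩
      · obtain ⟨c, L', h6, h7, h8, h9⟩ := ih h1' rfl h3'
        refine ⟨c, L', by omega, h7, ?_, h9⟩
        rw [h8, rowPath_cons (show a ≤ c by omega)]
        rfl
      · exact ⟨d2, (p + 1, d2) :: L, le_rfl, h5.2, by rw [rowPath_self]; rfl, h4⟩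

theorem isType1_iff {n i : ℕ} {L : List (ℕ × ℕ)} :
    IsType1 n i L ↔ (∀ c ∈ L, inR n i c) ∧
      (IsPath (1, i) (i, 2 * n - i - 1) L ∨ IsPath (1, i + 1) (i, 2 * n - i) L) := by
  constructor
  · rintro ⟨-, h1, h2, h3 | h3⟩
    · exact ⟨h2, .inl ⟨h1, h3.1, h3.2⟩⟩
    · exact ⟨h2, .inr ⟨h1, h3.1, h3.2⟩⟩
  · rintro ⟨h2, h3 | h3⟩
    · exact ⟨h3.ne_nil, h3.chain, h2, .inl ⟨h3.head, h3.last⟩⟩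
    · exact ⟨h3.ne_nil, h3.chain, h2, .inr ⟨h3.head, h3.last⟩⟩

theorem isType2_iff {n i : ℕ} {L1 L2 : List (ℕ × ℕ)} :
    IsType2 n i L1 L2 ↔ ∃ j, 1 ≤ j ∧ j < i ∧ (∀ c ∈ L1, inR n i c) ∧ (∀ c ∈ L2, inR n i c) ∧
      IsPath (1, i) (j, 2 * n - j) L1 ∧ IsPath (2, i) (j + 1, 2 * n - j - 1) L2 ∧
      ∀ c, c ∈ L1 → c ∉ L2 := by
  constructor
  · rintro ⟨j, h1, h2, -, -, h3, h4, h5, h6, h7, h8, h9, h10, h11⟩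
    exact ⟨j, h1, h2, h5, h6, ⟨h3, h7, h9⟩, ⟨h4, h8, h10⟩, fun c h12 h13 => h11 c ⟨h12, h13⟩⟩
  · rintro ⟨j, h1, h2, h5, h6, ⟨h3, h7, h9⟩, ⟨h4, h8, h10⟩, h11⟩
    exact ⟨j, h1, h2, IsPath.ne_nil ⟨h3, h7, h9⟩, IsPath.ne_nil ⟨h4, h8, h10⟩, h3, h4, h5, h6,
      h7, h8, h9, h10, fun c h12 => h11 c h12.1 h12.2⟩

/-- The sum of the first `k` entries of `s` in row `p`, starting from column `i`. -/
def rowSum (i : ℕ) (s : ℕ × ℕ → ℕ) (p k : ℕ) : ℕ := ∑ j ∈ Finset.range k, s (p, i + j)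

theorem monotone_rowSum (i : ℕ) (s : ℕ × ℕ → ℕ) (p : ℕ) : Monotone (rowSum i s p) :=
  monotone_nat_of_le_succ fun k => by simp [rowSum, Finset.sum_range_succ]

theorem rowSum_succ (i : ℕ) (s : ℕ × ℕ → ℕ) (p k : ℕ) :
    rowSum i s p (k + 1) = rowSum i s p k + s (p, i + k) :=
  Finset.sum_range_succ _ _

theorem sum_rowPath {i p a b : ℕ} (s : ℕ × ℕ → ℕ) (h : a ≤ b) :
    ((rowPath p (i + a) (i + b)).map s).sum + rowSum i s p a = rowSum i s p (b + 1) := by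
  induction h using Nat.decreasingInduction with
  | self => simp [rowPath_self, rowSum_succ, add_comm]
  | of_succ k hk ih =>
    rw [rowPath_cons (by omega), List.map_cons, List.sum_cons, ← ih, rowSum_succ]
    rw [add_assoc i k 1]
    omega

theorem sum_rowPath_left (i p b : ℕ) (s : ℕ × ℕ → ℕ) :
    ((rowPath p i (i + b)).map s).sum = rowSum i s p (b + 1) :=
  sum_rowPath (a := 0) s (Nat.zero_le b)

theorem rowSum_eq_zero {i p : ℕ} {s : ℕ × ℕ → ℕ} (h : ∀ q, s (p, q) = 0) (k : ℕ) :
    rowSum i s p k = 0 := by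
  simp [rowSum, h]

theorem row_zero {n i : ℕ} {s : ℕ × ℕ → ℕ} (h : ∀ b, ¬ inR n i b → s b = 0) (q : ℕ) :
    s (0, q) = 0 :=
  h _ fun hb => by simpa using hb.1

/-- The inequalities that cut out `SD n i m` when `i ≤ 3` and `2 * (n - i) = u + 1`. -/
structure Fits (i u m : ℕ) (s : ℕ × ℕ → ℕ) : Prop where
  strip : Strip u m (rowSum i s (i - 2)) (rowSum i s (i - 1)) (rowSum i s i)
    (s (i - 2, i + (u + 2))) (s (i - 1, i + (u + 2)))
  outer : rowSum i s (i - 2) (u + 2) + s (i - 2, i + (u + 2)) + s (i - 2, i + (u + 3)) +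
    rowSum i s (i - 1) (u + 2) + s (i - 1, i + (u + 2)) ≤ 2 * m

theorem fits_three_of_mem {n u m : ℕ} {s : ℕ × ℕ → ℕ} (hn : 2 * n = 6 + (u + 1))
    (hs : s ∈ SD n 3 m) : Fits 3 u m s := by
  obtain ⟨h0, h1, h2⟩ := hs
  have hc : cB n 3 = 2 := by
    unfold cB
    rw [if_neg (by omega)]
  rw [hc] at h2
  refine ⟨⟨?_, ?_, ?_, ?_⟩, ?_⟩ <;> simp only [Nat.reduceSub]
  · intro σ τ hσ hτ
    have hp : IsPath (1, 3) (3, 3 + u)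
        (rowPath 1 (3) (3 + σ) ++ (rowPath 2 (3 + σ) (3 + τ) ++ rowPath 3 (3 + τ) (3 + u))) :=
      ((isPath_rowPath (by omega)).row_append (by omega)).row_append (by omega)
    have := h1 _ (isType1_iff.2 ⟨?_, .inl (by
      convert hp using 2
      omega)⟩)
    · have e1 := sum_rowPath_left 3 1 σ s
      have e2 := sum_rowPath (i := 3) (p := 2) s hσ
      have e3 := sum_rowPath (i := 3) (p := 3) s hτ
      simp only [List.map_append, List.sum_append] at this
      omega
    · intro c hc
      simp only [inR, List.mem_append, mem_rowPath] at hc ⊢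
      omega
  · intro σ τ hσ hτ hu
    have hp : IsPath (1, 3 + 1) (3, 3 + (u + 1))
        (rowPath 1 (3 + 1) (3 + σ) ++
          (rowPath 2 (3 + σ) (3 + τ) ++ rowPath 3 (3 + τ) (3 + (u + 1)))) :=
      ((isPath_rowPath (by omega)).row_append (by omega)).row_append (by omega)
    have := h1 _ (isType1_iff.2 ⟨?_, .inr (by
      convert hp using 2
      omega)⟩)
    · have e1 := sum_rowPath (i := 3) (p := 1) s hσ
      have e2 := sum_rowPath (i := 3) (p := 2) s hτ
      have e3 : _ + _ = rowSum 3 s 3 (u + 2) := sum_rowPath s hu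
      simp only [List.map_append, List.sum_append] at this
      omega
    · intro c hc
      simp only [inR, List.mem_append, mem_rowPath] at hc ⊢
      omega
  · intro σ τ hσ hτ
    have hp : IsPath (1, 3) (2, 3 + (u + 2))
        (rowPath 1 (3) (3 + σ) ++ rowPath 2 (3 + σ) (3 + (u + 2))) :=
      (isPath_rowPath (by omega)).row_append (by omega)
    have hq : IsPath (2, 3) (3, 3 + (u + 1))
        (rowPath 2 (3) (3 + τ) ++ rowPath 3 (3 + τ) (3 + (u + 1))) :=
      (isPath_rowPath (by omega)).row_append (by omega)
    have := h2 _ _ (isType2_iff.2 ⟨2, by omega, by omega, ?_, ?_, (by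
      convert hp using 2
      omega), (by
      convert hq using 2
      omega), ?_⟩)
    · have e1 := sum_rowPath_left 3 1 σ s
      have e2 : _ + _ = rowSum 3 s 2 (u + 3) := sum_rowPath s (show σ ≤ u + 2 by omega)
      have e3 := sum_rowPath_left 3 2 τ s
      have e4 : _ + _ = rowSum 3 s 3 (u + 2) := sum_rowPath s (show τ ≤ u + 1 by omega)
      have e5 : rowSum 3 s 2 (u + 3) = _ := rowSum_succ 3 s 2 (u + 2)
      simp only [List.map_append, List.sum_append] at this
      omega
    all_goals
      intro c hc
      simp only [inR, List.mem_append, mem_rowPath] at hc ⊢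
      omega
  · intro τ hτ
    have hp : IsPath (1, 3) (2, 3 + (u + 2))
        (rowPath 1 (3) (3 + (u + 2)) ++ rowPath 2 (3 + (u + 2)) (3 + (u + 2))) :=
      (isPath_rowPath (by omega)).row_append (by omega)
    have hq : IsPath (2, 3) (3, 3 + (u + 1))
        (rowPath 2 (3) (3 + τ) ++ rowPath 3 (3 + τ) (3 + (u + 1))) :=
      (isPath_rowPath (by omega)).row_append (by omega)
    have := h2 _ _ (isType2_iff.2 ⟨2, by omega, by omega, ?_, ?_, (by
      convert hp using 2
      omega), (by
      convert hq using 2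
      omega), ?_⟩)
    · have e1 : _ = rowSum 3 s 1 (u + 3) := sum_rowPath_left 3 1 (u + 2) s
      have e2 : _ + _ = rowSum 3 s 2 (u + 3) := sum_rowPath s (le_refl (u + 2))
      have e3 := sum_rowPath_left 3 2 τ s
      have e4 : _ + _ = rowSum 3 s 3 (u + 2) := sum_rowPath s (show τ ≤ u + 1 by omega)
      have e5 : rowSum 3 s 2 (u + 3) = _ := rowSum_succ 3 s 2 (u + 2)
      have e6 : rowSum 3 s 1 (u + 3) = _ := rowSum_succ 3 s 1 (u + 2)
      simp only [List.map_append, List.sum_append] at this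
      omega
    all_goals
      intro c hc
      simp only [inR, List.mem_append, mem_rowPath] at hc ⊢
      omega
  · have hp : IsPath (1, 3) (1, 3 + (u + 3)) (rowPath 1 (3) (3 + (u + 3))) :=
      isPath_rowPath (by omega)
    have hq : IsPath (2, 3) (2, 3 + (u + 2)) (rowPath 2 (3) (3 + (u + 2))) :=
      isPath_rowPath (by omega)
    have := h2 _ _ (isType2_iff.2 ⟨1, by omega, by omega, ?_, ?_, (by
      convert hp using 2
      omega), (by
      convert hq using 2
      omega), ?_⟩)
    · have e1 : _ = rowSum 3 s 1 (u + 4) := sum_rowPath_left 3 1 (u + 3) s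
      have e3 : _ = rowSum 3 s 2 (u + 3) := sum_rowPath_left 3 2 (u + 2) s
      have e4 : rowSum 3 s 1 (u + 4) = _ := rowSum_succ 3 s 1 (u + 3)
      have e5 : rowSum 3 s 2 (u + 3) = _ := rowSum_succ 3 s 2 (u + 2)
      have e6 : rowSum 3 s 1 (u + 3) = _ := rowSum_succ 3 s 1 (u + 2)
      simp only [List.map_append, List.sum_append] at this
      omega
    all_goals
      intro c hc
      simp only [inR, mem_rowPath] at hc ⊢
      omega

theorem mem_SD_three {n u m : ℕ} {s : ℕ × ℕ → ℕ} (hn : 2 * n = 6 + (u + 1))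
    (h0 : ∀ b, ¬ inR n 3 b → s b = 0) (h : Fits 3 u m s) : s ∈ SD n 3 m := by
  have hc : cB n 3 = 2 := by
    unfold cB
    rw [if_neg (by omega)]
  obtain ⟨⟨h1, h2, h3, h4⟩, h5⟩ := h
  simp only [Nat.reduceSub] at h1 h2 h3 h4 h5
  refine ⟨h0, ?_, ?_⟩
  · intro L hL
    rcases (isType1_iff.1 hL).2 with hp | hp
    · rw [show 2 * n - 3 - 1 = 3 + u by omega] at hp
      obtain ⟨b, L', hb, -, rfl, hp'⟩ := hp.exists_split (by omega)
      obtain ⟨c, L', hc, hcu, rfl, hp''⟩ := hp'.exists_split (by omega)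
      obtain rfl := hp''.eq_rowPath
      obtain ⟨σ, rfl⟩ := Nat.exists_eq_add_of_le hb
      obtain ⟨τ, rfl⟩ := Nat.exists_eq_add_of_le (hb.trans hc)
      have e1 := sum_rowPath_left 3 1 σ s
      have e2 := sum_rowPath (i := 3) (p := 2) s (show σ ≤ τ by omega)
      have e3 := sum_rowPath (i := 3) (p := 3) s (show τ ≤ u by omega)
      have := h1 σ τ (by omega) (by omega)
      simp only [List.map_append, List.sum_append, Nat.reduceAdd]
      omega
    · rw [show 2 * n - 3 = 3 + (u + 1) by omega] at hp
      obtain ⟨b, L', hb, -, rfl, hp'⟩ := hp.exists_split (by omega)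
      obtain ⟨c, L', hc, hcu, rfl, hp''⟩ := hp'.exists_split (by omega)
      obtain rfl := hp''.eq_rowPath
      obtain ⟨σ, rfl⟩ := Nat.exists_eq_add_of_le (show 3 ≤ b by omega)
      obtain ⟨τ, rfl⟩ := Nat.exists_eq_add_of_le (show 3 ≤ c by omega)
      have e1 := sum_rowPath (i := 3) (p := 1) s (show 1 ≤ σ by omega)
      have e2 := sum_rowPath (i := 3) (p := 2) s (show σ ≤ τ by omega)
      have e3 : _ + _ = rowSum 3 s 3 (u + 2) := sum_rowPath s (show τ ≤ u + 1 by omega)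
      have := h2 σ τ (by omega) (by omega) (by omega)
      simp only [List.map_append, List.sum_append, Nat.reduceAdd] at e1 ⊢
      omega
  · intro L1 L2 hL
    obtain ⟨j, hj1, hj3, hR, -, hp, hq, hd⟩ := isType2_iff.1 hL
    rw [hc]
    obtain rfl | rfl : j = 1 ∨ j = 2 := by omega
    · rw [show 2 * n - 1 = 3 + (u + 3) by omega] at hp
      rw [show 2 * n - 1 - 1 = 3 + (u + 2) by omega] at hq
      obtain rfl := hp.eq_rowPath
      obtain rfl := hq.eq_rowPath
      have e1 : _ = rowSum 3 s 1 (u + 4) := sum_rowPath_left 3 1 (u + 3) s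
      have e2 : _ = rowSum 3 s 2 (u + 3) := sum_rowPath_left 3 2 (u + 2) s
      have e4 : rowSum 3 s 1 (u + 4) = _ := rowSum_succ 3 s 1 (u + 3)
      have e5 : rowSum 3 s 2 (u + 3) = _ := rowSum_succ 3 s 2 (u + 2)
      have e6 : rowSum 3 s 1 (u + 3) = _ := rowSum_succ 3 s 1 (u + 2)
      simp only [List.map_append, List.sum_append]
      omega
    · rw [show 2 * n - 2 = 3 + (u + 2) by omega] at hp
      rw [show 2 * n - 2 - 1 = 3 + (u + 1) by omega] at hq
      obtain ⟨b, L', hb, hbu, rfl, hp'⟩ := hp.exists_split (by omega)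
      obtain rfl := hp'.eq_rowPath
      obtain ⟨c, L', hc, hcu, rfl, hq'⟩ := hq.exists_split (by omega)
      obtain rfl := hq'.eq_rowPath
      obtain ⟨σ, rfl⟩ := Nat.exists_eq_add_of_le hb
      obtain ⟨τ, rfl⟩ := Nat.exists_eq_add_of_le hc
      have hτ : τ < σ := by
        by_contra hlt
        refine hd (2, 3 + τ) ?_ ?_ <;> simp only [List.mem_append, mem_rowPath, true_and] <;> omega
      have e1 := sum_rowPath_left 3 1 σ s
      have e2 : _ + _ = rowSum 3 s 2 (u + 3) := sum_rowPath s (show σ ≤ u + 2 by omega)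
      have e3 := sum_rowPath_left 3 2 τ s
      have e4 : _ + _ = rowSum 3 s 3 (u + 2) := sum_rowPath s (show τ ≤ u + 1 by omega)
      have e5 : rowSum 3 s 2 (u + 3) = _ := rowSum_succ 3 s 2 (u + 2)
      have e6 : rowSum 3 s 1 (u + 3) = _ := rowSum_succ 3 s 1 (u + 2)
      simp only [List.map_append, List.sum_append, Nat.reduceAdd]
      rcases (show σ ≤ u + 2 by omega).lt_or_eq with hσ | rfl
      · have := h3 σ τ hτ (by omega)
        omega
      · have := h4 τ (by omega)
        simp only [add_assoc, Nat.reduceAdd] at *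
        omega

theorem fits_two_of_mem {n u m : ℕ} {s : ℕ × ℕ → ℕ} (hn : 2 * n = 4 + (u + 1))
    (hs : s ∈ SD n 2 m) : Fits 2 u m s := by
  obtain ⟨h0, h1, h2⟩ := hs
  have hc : cB n 2 = 2 := by
    unfold cB
    rw [if_neg (by omega)]
  rw [hc] at h2
  have hz := row_zero h0
  have hz' := rowSum_eq_zero (i := 2) hz
  have k1 : ∀ τ, τ ≤ u → rowSum 2 s 1 (τ + 1) + rowSum 2 s 2 (u + 1) ≤ m + rowSum 2 s 2 τ := by
    intro τ hτ
    have hp : IsPath (1, 2) (2, 2 + u) (rowPath 1 2 (2 + τ) ++ rowPath 2 (2 + τ) (2 + u)) :=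
      (isPath_rowPath (by omega)).row_append (by omega)
    have := h1 _ (isType1_iff.2 ⟨?_, .inl (by
      convert hp using 2
      omega)⟩)
    · have e1 := sum_rowPath_left 2 1 τ s
      have e2 := sum_rowPath (i := 2) (p := 2) s hτ
      simp only [List.map_append, List.sum_append] at this
      omega
    · intro c hc
      simp only [inR, List.mem_append, mem_rowPath] at hc ⊢
      omega
  have k2 : ∀ τ, 1 ≤ τ → τ ≤ u + 1 →
      rowSum 2 s 1 (τ + 1) + rowSum 2 s 2 (u + 2) ≤ m + rowSum 2 s 1 1 + rowSum 2 s 2 τ := by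
    intro τ hτ hu
    have hp : IsPath (1, 2 + 1) (2, 2 + (u + 1))
        (rowPath 1 (2 + 1) (2 + τ) ++ rowPath 2 (2 + τ) (2 + (u + 1))) :=
      (isPath_rowPath (by omega)).row_append (by omega)
    have := h1 _ (isType1_iff.2 ⟨?_, .inr (by
      convert hp using 2
      omega)⟩)
    · have e1 := sum_rowPath (i := 2) (p := 1) s hτ
      have e2 : _ + _ = rowSum 2 s 2 (u + 2) := sum_rowPath s hu
      simp only [List.map_append, List.sum_append] at this
      omega
    · intro c hc
      simp only [inR, List.mem_append, mem_rowPath] at hc ⊢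
      omega
  have k3 : rowSum 2 s 1 (u + 2) + s (1, 2 + (u + 2)) + rowSum 2 s 2 (u + 2) ≤ 2 * m := by
    have hp : IsPath (1, 2) (1, 2 + (u + 2)) (rowPath 1 2 (2 + (u + 2))) :=
      isPath_rowPath (by omega)
    have hq : IsPath (2, 2) (2, 2 + (u + 1)) (rowPath 2 2 (2 + (u + 1))) :=
      isPath_rowPath (by omega)
    have := h2 _ _ (isType2_iff.2 ⟨1, by omega, by omega, ?_, ?_, (by
      convert hp using 2
      omega), (by
      convert hq using 2
      omega), ?_⟩)
    · have e1 : _ = rowSum 2 s 1 (u + 3) := sum_rowPath_left 2 1 (u + 2) s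
      have e2 : _ = rowSum 2 s 2 (u + 2) := sum_rowPath_left 2 2 (u + 1) s
      have e3 : rowSum 2 s 1 (u + 3) = _ := rowSum_succ 2 s 1 (u + 2)
      simp only [List.map_append, List.sum_append] at this
      omega
    all_goals
      intro c hc
      simp only [inR, mem_rowPath] at hc ⊢
      omega
  have hm := monotone_rowSum 2 s 1
  refine ⟨⟨?_, ?_, ?_, ?_⟩, ?_⟩ <;> simp only [Nat.reduceSub, Nat.sub_self, hz, hz']
  · intro σ τ hσ hτ
    have := k1 τ hτ
    omega
  · intro σ τ hσ hτ hu
    have := k2 τ (by omega) hu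
    have := hm hσ
    omega
  · intro σ τ hσ hτ
    have := hm (show τ + 1 ≤ σ by omega)
    omega
  · intro τ hτ
    have := hm (show τ + 1 ≤ u + 2 by omega)
    omega
  · omega

theorem mem_SD_two {n u m : ℕ} {s : ℕ × ℕ → ℕ} (hn : 2 * n = 4 + (u + 1))
    (h0 : ∀ b, ¬ inR n 2 b → s b = 0) (h : Fits 2 u m s) : s ∈ SD n 2 m := by
  have hc : cB n 2 = 2 := by
    unfold cB
    rw [if_neg (by omega)]
  obtain ⟨⟨h1, h2, h3, h4⟩, h5⟩ := h
  have hz := row_zero h0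
  have hz' := rowSum_eq_zero (i := 2) hz
  simp only [Nat.reduceSub, Nat.sub_self, hz, hz'] at h1 h2 h3 h4 h5
  have hzero : rowSum 2 s 1 0 = 0 ∧ rowSum 2 s 2 0 = 0 := ⟨rfl, rfl⟩
  refine ⟨h0, ?_, ?_⟩
  · intro L hL
    rcases (isType1_iff.1 hL).2 with hp | hp
    · rw [show 2 * n - 2 - 1 = 2 + u by omega] at hp
      obtain ⟨b, L', hb, hbu, rfl, hp'⟩ := hp.exists_split (by omega)
      obtain rfl := hp'.eq_rowPath
      obtain ⟨τ, rfl⟩ := Nat.exists_eq_add_of_le hb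
      have e1 := sum_rowPath_left 2 1 τ s
      have e3 := sum_rowPath (i := 2) (p := 2) s (show τ ≤ u by omega)
      have := h1 0 τ (by omega) (by omega)
      simp only [List.map_append, List.sum_append, Nat.reduceAdd]
      omega
    · rw [show 2 * n - 2 = 2 + (u + 1) by omega] at hp
      obtain ⟨b, L', hb, hbu, rfl, hp'⟩ := hp.exists_split (by omega)
      obtain rfl := hp'.eq_rowPath
      obtain ⟨τ, rfl⟩ := Nat.exists_eq_add_of_le (show 2 ≤ b by omega)
      have e1 := sum_rowPath (i := 2) (p := 1) s (show 1 ≤ τ by omega)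
      have e3 : _ + _ = rowSum 2 s 2 (u + 2) := sum_rowPath s (show τ ≤ u + 1 by omega)
      have := h2 1 τ (by omega) (by omega) (by omega)
      simp only [List.map_append, List.sum_append, Nat.reduceAdd] at e1 ⊢
      omega
  · intro L1 L2 hL
    obtain ⟨j, hj1, hj3, -, -, hp, hq, -⟩ := isType2_iff.1 hL
    rw [hc]
    obtain rfl : j = 1 := by omega
    rw [show 2 * n - 1 = 2 + (u + 2) by omega] at hp
    rw [show 2 * n - 1 - 1 = 2 + (u + 1) by omega] at hq
    obtain rfl := hp.eq_rowPath
    obtain rfl := hq.eq_rowPath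
    have e1 : _ = rowSum 2 s 1 (u + 3) := sum_rowPath_left 2 1 (u + 2) s
    have e2 : _ = rowSum 2 s 2 (u + 2) := sum_rowPath_left 2 2 (u + 1) s
    have e3 : rowSum 2 s 1 (u + 3) = _ := rowSum_succ 2 s 1 (u + 2)
    have := h3 1 0 (by omega) (by omega)
    simp only [List.map_append, List.sum_append, zero_add] at this ⊢
    omega

theorem fits_one_of_mem {n u m : ℕ} {s : ℕ × ℕ → ℕ} (hn : 2 * n = 2 + (u + 1))
    (hs : s ∈ SD n 1 m) : Fits 1 u m s := by
  obtain ⟨h0, h1, -⟩ := hs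
  have hz := row_zero h0
  have hz' := rowSum_eq_zero (i := 1) hz
  have k1 : rowSum 1 s 1 (u + 1) ≤ m := by
    have hp : IsPath (1, 1) (1, 1 + u) (rowPath 1 1 (1 + u)) := isPath_rowPath (by omega)
    have := h1 _ (isType1_iff.2 ⟨?_, .inl (by
      convert hp using 2
      omega)⟩)
    · rwa [sum_rowPath_left] at this
    · intro c hc
      simp only [inR, mem_rowPath] at hc ⊢
      omega
  have k2 : rowSum 1 s 1 (u + 2) ≤ m + rowSum 1 s 1 1 := by
    have hp : IsPath (1, 1 + 1) (1, 1 + (u + 1)) (rowPath 1 (1 + 1) (1 + (u + 1))) :=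
      isPath_rowPath (by omega)
    have := h1 _ (isType1_iff.2 ⟨?_, .inr (by
      convert hp using 2
      omega)⟩)
    · have e1 : _ + _ = rowSum 1 s 1 (u + 2) := sum_rowPath s (show 1 ≤ u + 1 by omega)
      omega
    · intro c hc
      simp only [inR, mem_rowPath] at hc ⊢
      omega
  have hm := monotone_rowSum 1 s 1
  have k3 := hm (show 1 ≤ u + 1 by omega)
  refine ⟨⟨?_, ?_, ?_, ?_⟩, ?_⟩ <;> simp only [Nat.reduceSub, Nat.sub_self, hz, hz']
  · intro σ τ hσ hτ
    omega
  · intro σ τ hσ hτ hu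
    have := hm (show 1 ≤ τ by omega)
    omega
  · intro σ τ hσ hτ
    omega
  · intro τ hτ
    omega
  · omega

theorem mem_SD_one {n u m : ℕ} {s : ℕ × ℕ → ℕ} (hn : 2 * n = 2 + (u + 1))
    (h0 : ∀ b, ¬ inR n 1 b → s b = 0) (h : Fits 1 u m s) : s ∈ SD n 1 m := by
  obtain ⟨⟨h1, h2, -, -⟩, -⟩ := h
  have hz := row_zero h0
  have hz' := rowSum_eq_zero (i := 1) hz
  simp only [Nat.reduceSub, Nat.sub_self, hz'] at h1 h2
  have hzero : rowSum 1 s 1 0 = 0 := rfl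
  refine ⟨h0, ?_, ?_⟩
  · intro L hL
    rcases (isType1_iff.1 hL).2 with hp | hp
    · rw [show 2 * n - 1 - 1 = 1 + u by omega] at hp
      obtain rfl := hp.eq_rowPath
      have := h1 0 0 (by omega) (by omega)
      rw [sum_rowPath_left]
      omega
    · rw [show 2 * n - 1 = 1 + (u + 1) by omega] at hp
      obtain rfl := hp.eq_rowPath
      have e1 : _ + _ = rowSum 1 s 1 (u + 2) := sum_rowPath s (show 1 ≤ u + 1 by omega)
      have := h2 1 1 (by omega) (by omega) (by omega)
      omega
  · intro L1 L2 hL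
    obtain ⟨j, hj1, hj3, -⟩ := isType2_iff.1 hL
    omega

theorem mem_SD_iff {n i u m : ℕ} {s : ℕ × ℕ → ℕ} (hi : 1 ≤ i) (hi' : i ≤ 3)
    (hn : 2 * n = 2 * i + (u + 1)) :
    s ∈ SD n i m ↔ (∀ b, ¬ inR n i b → s b = 0) ∧ Fits i u m s := by
  obtain rfl | rfl | rfl : i = 1 ∨ i = 2 ∨ i = 3 := by omega
  · exact ⟨fun h => ⟨h.1, fits_one_of_mem hn h⟩, fun h => mem_SD_one hn h.1 h.2⟩
  · exact ⟨fun h => ⟨h.1, fits_two_of_mem hn h⟩, fun h => mem_SD_two hn h.1 h.2⟩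
  · exact ⟨fun h => ⟨h.1, fits_three_of_mem hn h⟩, fun h => mem_SD_three hn h.1 h.2⟩

theorem Strip.congr {u m x y : ℕ} {α β γ α' β' γ' : ℕ → ℕ} (h : Strip u m α β γ x y)
    (hα : ∀ k ≤ u + 2, α' k = α k) (hβ : ∀ k ≤ u + 2, β' k = β k)
    (hγ : ∀ k ≤ u + 2, γ' k = γ k) : Strip u m α' β' γ' x y := by
  constructor
  · intro σ τ h1 h2
    rw [hα _ (by omega), hβ _ (by omega), hβ _ (by omega), hγ _ (by omega), hγ _ (by omega)]
    exact h.lower σ τ h1 h2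
  · intro σ τ h1 h2 h3
    rw [hα _ (by omega), hα _ (by omega), hβ _ (by omega), hβ _ (by omega), hγ _ (by omega),
      hγ _ (by omega)]
    exact h.upper σ τ h1 h2 h3
  · intro σ τ h1 h2
    rw [hα _ (by omega), hβ _ (by omega), hβ _ (by omega), hβ _ (by omega), hγ _ (by omega),
      hγ _ (by omega)]
    exact h.double σ τ h1 h2
  · intro τ h1
    rw [hα _ (by omega), hβ _ (by omega), hγ _ (by omega), hγ _ (by omega)]
    exact h.doubleTop τ h1

/-- The row whose first `u + 2` entries are the increments of `f`, followed by `x` and `z`. -/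
def incr (u : ℕ) (f : ℕ → ℕ) (x z j : ℕ) : ℕ :=
  if j ≤ u + 1 then f (j + 1) - f j else if j = u + 2 then x else if j = u + 3 then z else 0

theorem incr_le {i p u x z : ℕ} {s : ℕ × ℕ → ℕ} {f : ℕ → ℕ} (hf : Dominated u f (rowSum i s p))
    (hx : x ≤ s (p, i + (u + 2))) (hz : z ≤ s (p, i + (u + 3))) (j : ℕ) :
    incr u f x z j ≤ s (p, i + j) := by
  unfold incr
  split_ifs with h1 h2 h3
  · have := hf.2 j h1
    rw [rowSum_succ] at this
    omega
  · rwa [h2]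
  · rwa [h3]
  · exact Nat.zero_le _

theorem rowSum_eq_of_incr {i p u x z : ℕ} {s s' : ℕ × ℕ → ℕ} {f : ℕ → ℕ}
    (hf : Dominated u f (rowSum i s p)) (hs : ∀ j, s' (p, i + j) = incr u f x z j) {k : ℕ}
    (hk : k ≤ u + 2) : rowSum i s' p k = f k := by
  induction k with
  | zero => exact hf.1.symm
  | succ k ih =>
    have := hf.2 k (by omega)
    rw [rowSum_succ, hs, ih (by omega), incr, if_pos (by omega)]
    omega

theorem rowSum_sub {i : ℕ} {s s' : ℕ × ℕ → ℕ} (h : ∀ b, s' b ≤ s b) (p k : ℕ) :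
    rowSum i (s - s') p k = rowSum i s p k - rowSum i s' p k :=
  Finset.sum_tsub_distrib _ fun _ _ => h _

/-- The entries with increments `γ`, `β`, `α` in the rows `i`, `i - 1`, `i - 2`. -/
def ofRows (i u : ℕ) (α β γ : ℕ → ℕ) (x y z : ℕ) (b : ℕ × ℕ) : ℕ :=
  if b.2 < i then 0 else if b.1 = i then incr u γ 0 0 (b.2 - i)
  else if b.1 + 1 = i then incr u β y 0 (b.2 - i)
  else if b.1 + 2 = i then incr u α x z (b.2 - i) else 0

theorem exists_peel {n i u m : ℕ} {s : ℕ × ℕ → ℕ} (hi : 1 ≤ i) (hi' : i ≤ 3)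
    (hn : 2 * n = 2 * i + (u + 1)) (hm : 1 ≤ m) (hs : s ∈ SD n i m) :
    ∃ d, (d = 1 ∨ d = 2 ∧ 3 ≤ i) ∧ d ≤ m ∧ s ∈ SD n i d + SD n i (m - d) := by
  obtain ⟨h0, hstrip, hout⟩ := (mem_SD_iff hi hi' hn).1 hs
  have hpt : StripPoint u m (rowSum i s (i - 2)) (rowSum i s (i - 1)) (rowSum i s i)
      (s (i - 2, i + (u + 2))) (s (i - 1, i + (u + 2))) :=
    { hstrip with
      level := hm
      width := by omega
      zeroA := rfl
      zeroB := rfl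
      zeroC := rfl
      monoA := monotone_rowSum _ _ _
      monoB := monotone_rowSum _ _ _
      monoC := monotone_rowSum _ _ _ }
  obtain ⟨d, hd, hdm, α', β', γ', x', y', hα, hβ, hγ, hx, hy, hs1, hs2⟩ := hpt.peels_all
  have hz := row_zero h0
  obtain ⟨z', hz'⟩ : ∃ z', z' = min (s (i - 2, i + (u + 3)))
    (2 * d - (α' (u + 2) + x' + y' + β' (u + 2))) := ⟨_, rfl⟩
  obtain ⟨s', hs'⟩ : ∃ s', s' = ofRows i u α' β' γ' x' y' z' := ⟨_, rfl⟩
  have r0 : ∀ j, s' (i, i + j) = incr u γ' 0 0 j := by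
    intro j
    simp [hs', ofRows]
  have r1 : ∀ j, s' (i - 1, i + j) = incr u β' y' 0 j := by
    intro j
    simp [hs', ofRows, show i - 1 ≠ i by omega, show i - 1 + 1 = i by omega]
  have b0 := incr_le hγ (Nat.zero_le _) (Nat.zero_le _)
  have b1 := incr_le hβ hy (Nat.zero_le _)
  have b2 := incr_le hα hx (show z' ≤ _ by omega)
  have r2 : ∀ j, s' (i - 2, i + j) = incr u α' x' z' j := by
    intro j
    rcases hi.eq_or_lt with rfl | h2
    · have e1 := r1 j
      have e2 := b1 j
      have e3 := b2 j
      simp only [Nat.reduceSub, Nat.sub_self, hz] at e1 e2 e3 ⊢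
      omega
    · simp [hs', ofRows, show i - 2 ≠ i by omega, show i - 2 + 1 ≠ i by omega,
        show i - 2 + 2 = i by omega]
  have hle : ∀ b, s' b ≤ s b := by
    rintro ⟨p, q⟩
    rw [hs']
    simp only [ofRows]
    split_ifs with c1 c2 c3 c4
    · exact Nat.zero_le _
    · obtain ⟨j, rfl⟩ := Nat.exists_eq_add_of_le (not_lt.1 c1)
      simpa [c2] using b0 j
    · obtain ⟨j, rfl⟩ := Nat.exists_eq_add_of_le (not_lt.1 c1)
      simpa [show i - 1 = p by omega] using b1 j
    · obtain ⟨j, rfl⟩ := Nat.exists_eq_add_of_le (not_lt.1 c1)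
      simpa [show i - 2 = p by omega] using b2 j
    · exact Nat.zero_le _
  have sα : ∀ k ≤ u + 2, rowSum i s' (i - 2) k = α' k := fun k => rowSum_eq_of_incr hα r2
  have sβ : ∀ k ≤ u + 2, rowSum i s' (i - 1) k = β' k := fun k => rowSum_eq_of_incr hβ r1
  have sγ : ∀ k ≤ u + 2, rowSum i s' i k = γ' k := fun k => rowSum_eq_of_incr hγ r0
  have vx : s' (i - 2, i + (u + 2)) = x' := by simp [r2, incr]
  have vz : s' (i - 2, i + (u + 3)) = z' := by simp [r2, incr]
  have vy : s' (i - 1, i + (u + 2)) = y' := by simp [r1, incr]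
  have t1 := hs1.doubleTop (u + 1) le_rfl
  have t2 := hs2.doubleTop (u + 1) le_rfl
  have t3 := hγ.2 (u + 1) le_rfl
  have t4 := hγ.le (show u + 1 ≤ u + 2 by omega)
  have t5 := hγ.le (le_refl (u + 2))
  have t6 := hα.le (le_refl (u + 2))
  have t7 := hβ.le (le_refl (u + 2))
  simp only [Pi.sub_apply, add_assoc, Nat.reduceAdd] at t1 t2 t3
  refine ⟨d, ?_, hdm, Set.mem_add.2 ⟨s', ?_, s - s', ?_, ?_⟩⟩
  · refine hd.imp_right fun h => ⟨h.1, ?_⟩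
    by_contra hlt
    have h1 := h.2
    rw [show i - 2 = 0 by omega, rowSum_eq_zero hz] at h1
    omega
  · refine (mem_SD_iff hi hi' hn).2 ⟨fun b hb => ?_, ?_, ?_⟩
    · have := hle b
      rw [h0 b hb] at this
      omega
    · rw [vx, vy]
      exact hs1.congr sα sβ sγ
    · rw [vx, vy, vz, sα _ le_rfl, sβ _ le_rfl]
      omega
  · refine (mem_SD_iff hi hi' hn).2 ⟨fun b hb => ?_, ?_, ?_⟩
    · simp [h0 b hb]
    · simp only [Pi.sub_apply, vx, vy]
      refine hs2.congr ?_ ?_ ?_ <;> intro k hk <;> rw [rowSum_sub hle, Pi.sub_apply]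
      · rw [sα k hk]
      · rw [sβ k hk]
      · rw [sγ k hk]
    · simp only [Pi.sub_apply, rowSum_sub hle, vx, vy, vz, sα _ le_rfl, sβ _ le_rfl]
      omega
  · funext b
    have := hle b
    simp only [Pi.add_apply, Pi.sub_apply]
    omega

theorem not_isType1_self (n : ℕ) (L : List (ℕ × ℕ)) : ¬ IsType1 n n L := by
  intro h
  obtain ⟨hR, h | h⟩ := isType1_iff.1 h
  · have h1 := h.le
    have h2 := hR (1, n) (List.mem_of_mem_head? h.head)
    simp only [inR] at h2
    omega
  · have h1 := h.le
    omega

theorem isType2_two_iff {L1 L2 : List (ℕ × ℕ)} :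
    IsType2 2 2 L1 L2 ↔ L1 = [(1, 2), (1, 3)] ∧ L2 = [(2, 2)] := by
  rw [isType2_iff]
  constructor
  · rintro ⟨j, hj1, hj2, -, -, hp, hq, -⟩
    obtain rfl : j = 1 := by omega
    exact ⟨hp.eq_rowPath, hq.eq_rowPath⟩
  · rintro ⟨rfl, rfl⟩
    refine ⟨1, le_rfl, by omega, ?_, ?_, ⟨?_, rfl, rfl⟩, ⟨?_, rfl, rfl⟩, ?_⟩ <;>
      simp [inR, RootStep]

theorem isType2_three_iff {L1 L2 : List (ℕ × ℕ)} :
    IsType2 3 3 L1 L2 ↔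
      L1 = [(1, 3), (1, 4), (1, 5)] ∧ L2 = [(2, 3), (2, 4)] ∨
      L1 = [(1, 3), (1, 4), (2, 4)] ∧ L2 = [(2, 3), (3, 3)] := by
  rw [isType2_iff]
  constructor
  · rintro ⟨j, hj1, hj2, -, -, hp, hq, hd⟩
    obtain rfl | rfl : j = 1 ∨ j = 2 := by omega
    · exact .inl ⟨hp.eq_rowPath, hq.eq_rowPath⟩
    · obtain ⟨b, L, hb, hb', rfl, hp'⟩ := hp.exists_split (by omega)
      obtain rfl := hp'.eq_rowPath
      obtain ⟨c, L, hc, hc', rfl, hq'⟩ := hq.exists_split (by omega)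
      obtain rfl := hq'.eq_rowPath
      obtain rfl : c = 3 := by omega
      obtain rfl | rfl : b = 3 ∨ b = 4 := by omega
      · exact absurd (hd (2, 3)) (by simp [mem_rowPath])
      · exact .inr ⟨rfl, rfl⟩
  · rintro (⟨rfl, rfl⟩ | ⟨rfl, rfl⟩)
    · refine ⟨1, le_rfl, by omega, ?_, ?_, ⟨?_, rfl, rfl⟩, ⟨?_, rfl, rfl⟩, ?_⟩ <;>
        simp [inR, RootStep]
    · refine ⟨2, by omega, by omega, ?_, ?_, ⟨?_, rfl, rfl⟩, ⟨?_, rfl, rfl⟩, ?_⟩ <;>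
        simp [inR, RootStep]

theorem isType2_four_iff {L1 L2 : List (ℕ × ℕ)} :
    IsType2 4 4 L1 L2 ↔
      L1 = [(1, 4), (1, 5), (1, 6), (1, 7)] ∧ L2 = [(2, 4), (2, 5), (2, 6)] ∨
      L1 = [(1, 4), (1, 5), (2, 5), (2, 6)] ∧ L2 = [(2, 4), (3, 4), (3, 5)] ∨
      L1 = [(1, 4), (1, 5), (1, 6), (2, 6)] ∧ L2 = [(2, 4), (3, 4), (3, 5)] ∨
      L1 = [(1, 4), (1, 5), (1, 6), (2, 6)] ∧ L2 = [(2, 4), (2, 5), (3, 5)] ∨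
      L1 = [(1, 4), (1, 5), (2, 5), (3, 5)] ∧ L2 = [(2, 4), (3, 4), (4, 4)] := by
  rw [isType2_iff]
  constructor
  · rintro ⟨j, hj1, hj2, -, -, hp, hq, hd⟩
    obtain rfl | rfl | rfl : j = 1 ∨ j = 2 ∨ j = 3 := by omega
    · exact .inl ⟨hp.eq_rowPath, hq.eq_rowPath⟩
    · obtain ⟨b, L, hb, hb', rfl, hp'⟩ := hp.exists_split (by omega)
      obtain rfl := hp'.eq_rowPath
      obtain ⟨c, L, hc, hc', rfl, hq'⟩ := hq.exists_split (by omega)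
      obtain rfl := hq'.eq_rowPath
      have hcb : c < b := by
        by_contra hlt
        refine hd (2, c) ?_ ?_ <;> simp only [List.mem_append, mem_rowPath, true_and] <;> omega
      obtain ⟨rfl, rfl⟩ | ⟨rfl, rfl⟩ | ⟨rfl, rfl⟩ :
          b = 5 ∧ c = 4 ∨ b = 6 ∧ c = 4 ∨ b = 6 ∧ c = 5 := by omega
      · exact .inr (.inl ⟨rfl, rfl⟩)
      · exact .inr (.inr (.inl ⟨rfl, rfl⟩))
      · exact .inr (.inr (.inr (.inl ⟨rfl, rfl⟩)))
    · obtain ⟨b, L, hb, hb', rfl, hp'⟩ := hp.exists_split (by omega)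
      obtain ⟨e, L, he, he', rfl, hp''⟩ := hp'.exists_split (by omega)
      obtain rfl := hp''.eq_rowPath
      obtain ⟨c, L, hc, hc', rfl, hq'⟩ := hq.exists_split (by omega)
      obtain ⟨f, L, hf, hf', rfl, hq''⟩ := hq'.exists_split (by omega)
      obtain rfl := hq''.eq_rowPath
      obtain rfl : c = 4 := by omega
      obtain rfl : f = 4 := by omega
      obtain rfl | ⟨rfl, rfl⟩ : b = 4 ∨ b = 5 ∧ e = 5 := by omega
      · exact absurd (hd (2, 4)) (by simp [mem_rowPath, he])
      · exact .inr (.inr (.inr (.inr ⟨rfl, rfl⟩)))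
  · rintro (⟨rfl, rfl⟩ | ⟨rfl, rfl⟩ | ⟨rfl, rfl⟩ | ⟨rfl, rfl⟩ | ⟨rfl, rfl⟩)
    · refine ⟨1, le_rfl, by omega, ?_, ?_, ⟨?_, rfl, rfl⟩, ⟨?_, rfl, rfl⟩, ?_⟩ <;>
        simp [inR, RootStep]
    iterate 3
      · refine ⟨2, by omega, by omega, ?_, ?_, ⟨?_, rfl, rfl⟩, ⟨?_, rfl, rfl⟩, ?_⟩ <;>
          simp [inR, RootStep]
    · refine ⟨3, by omega, by omega, ?_, ?_, ⟨?_, rfl, rfl⟩, ⟨?_, rfl, rfl⟩, ?_⟩ <;>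
        simp [inR, RootStep]

/-- The double path inequalities of `SD n n m`. -/
def FitsDouble (n m : ℕ) (s : ℕ × ℕ → ℕ) : Prop :=
  ∀ L1 L2, IsType2 n n L1 L2 → (L1.map s).sum + (L2.map s).sum ≤ m

theorem mem_SD_self_iff {n m : ℕ} {s : ℕ × ℕ → ℕ} :
    s ∈ SD n n m ↔ (∀ b, ¬ inR n n b → s b = 0) ∧ FitsDouble n m s := by
  simp only [SD, Set.mem_ofPred_eq, cB, or_true, if_true, mul_one, List.map_append,
    List.sum_append, not_isType1_self, false_imp_iff, implies_true, true_and, FitsDouble]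

/-- The restriction to `T` of the truncation of `s` at one. -/
def unitPart (T : List (ℕ × ℕ)) (s : ℕ × ℕ → ℕ) (b : ℕ × ℕ) : ℕ :=
  if b ∈ T then min 1 (s b) else 0

theorem mem_add_of_unitPart {n m d : ℕ} {s : ℕ × ℕ → ℕ} (h0 : ∀ b, ¬ inR n n b → s b = 0)
    (T : List (ℕ × ℕ)) (h1 : FitsDouble n d (unitPart T s))
    (h2 : FitsDouble n (m - d) (s - unitPart T s)) : s ∈ SD n n d + SD n n (m - d) := by
  have hle : ∀ b, unitPart T s b ≤ s b := fun b => by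
    unfold unitPart
    split_ifs <;> omega
  refine Set.mem_add.2 ⟨unitPart T s, mem_SD_self_iff.2 ⟨fun b hb => ?_, h1⟩,
    s - unitPart T s, mem_SD_self_iff.2 ⟨fun b hb => ?_, h2⟩, ?_⟩
  · have := hle b
    rw [h0 b hb] at this
    omega
  · simp [h0 b hb]
  · funext b
    have := hle b
    simp only [Pi.add_apply, Pi.sub_apply]
    omega

theorem fitsDouble_two_iff {m : ℕ} {s : ℕ × ℕ → ℕ} :
    FitsDouble 2 m s ↔ s (1, 2) + s (1, 3) + s (2, 2) ≤ m := by
  simp only [FitsDouble, isType2_two_iff]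
  constructor
  · intro h
    simpa [add_assoc] using h _ _ ⟨rfl, rfl⟩
  · rintro h L1 L2 ⟨rfl, rfl⟩
    simpa [add_assoc] using h

theorem fitsDouble_three_iff {m : ℕ} {s : ℕ × ℕ → ℕ} :
    FitsDouble 3 m s ↔ s (1, 3) + s (1, 4) + s (1, 5) + s (2, 3) + s (2, 4) ≤ m ∧
      s (1, 3) + s (1, 4) + s (2, 4) + s (2, 3) + s (3, 3) ≤ m := by
  simp only [FitsDouble, isType2_three_iff]
  constructor
  · intro h
    have h1 := h _ _ (.inl ⟨rfl, rfl⟩)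
    have h2 := h _ _ (.inr ⟨rfl, rfl⟩)
    simp only [List.map_cons, List.map_nil, List.sum_cons, List.sum_nil] at h1 h2
    omega
  · rintro h L1 L2 (⟨rfl, rfl⟩ | ⟨rfl, rfl⟩) <;>
      simp only [List.map_cons, List.map_nil, List.sum_cons, List.sum_nil] <;> omega

theorem fitsDouble_four_iff {m : ℕ} {s : ℕ × ℕ → ℕ} :
    FitsDouble 4 m s ↔
      s (1, 4) + s (1, 5) + s (1, 6) + s (1, 7) + s (2, 4) + s (2, 5) + s (2, 6) ≤ m ∧
      s (1, 4) + s (1, 5) + s (2, 5) + s (2, 6) + s (2, 4) + s (3, 4) + s (3, 5) ≤ m ∧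
      s (1, 4) + s (1, 5) + s (1, 6) + s (2, 6) + s (2, 4) + s (3, 4) + s (3, 5) ≤ m ∧
      s (1, 4) + s (1, 5) + s (1, 6) + s (2, 6) + s (2, 4) + s (2, 5) + s (3, 5) ≤ m ∧
      s (1, 4) + s (1, 5) + s (2, 5) + s (3, 5) + s (2, 4) + s (3, 4) + s (4, 4) ≤ m := by
  simp only [FitsDouble, isType2_four_iff]
  constructor
  · intro h
    have h1 := h _ _ (.inl ⟨rfl, rfl⟩)
    have h2 := h _ _ (.inr (.inl ⟨rfl, rfl⟩))
    have h3 := h _ _ (.inr (.inr (.inl ⟨rfl, rfl⟩)))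
    have h4 := h _ _ (.inr (.inr (.inr (.inl ⟨rfl, rfl⟩))))
    have h5 := h _ _ (.inr (.inr (.inr (.inr ⟨rfl, rfl⟩))))
    simp only [List.map_cons, List.map_nil, List.sum_cons, List.sum_nil] at h1 h2 h3 h4 h5
    omega
  · rintro h L1 L2 (⟨rfl, rfl⟩ | ⟨rfl, rfl⟩ | ⟨rfl, rfl⟩ | ⟨rfl, rfl⟩ | ⟨rfl, rfl⟩) <;>
      simp only [List.map_cons, List.map_nil, List.sum_cons, List.sum_nil] <;> omega

theorem exists_peel_two {m : ℕ} {s : ℕ × ℕ → ℕ} (hm : 1 ≤ m) (hs : s ∈ SD 2 2 m) :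
    s ∈ SD 2 2 1 + SD 2 2 (m - 1) := by
  obtain ⟨h0, h⟩ := mem_SD_self_iff.1 hs
  rw [fitsDouble_two_iff] at h
  obtain ⟨T, hT1, hT2⟩ : ∃ T, FitsDouble 2 1 (unitPart T s) ∧
      FitsDouble 2 (m - 1) (s - unitPart T s) := by
    simp only [fitsDouble_two_iff, Pi.sub_apply]
    by_cases h12 : 0 < s (1, 2)
    · refine ⟨[(1, 2)], ?_⟩
      simp [unitPart]
      omega
    by_cases h13 : 0 < s (1, 3)
    · refine ⟨[(1, 3)], ?_⟩
      simp [unitPart]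
      omega
    · refine ⟨[(2, 2)], ?_⟩
      simp [unitPart]
      omega
  exact mem_add_of_unitPart h0 T hT1 hT2

theorem exists_peel_three {m : ℕ} {s : ℕ × ℕ → ℕ} (hm : 1 ≤ m) (hs : s ∈ SD 3 3 m) :
    s ∈ SD 3 3 1 + SD 3 3 (m - 1) := by
  obtain ⟨h0, h⟩ := mem_SD_self_iff.1 hs
  rw [fitsDouble_three_iff] at h
  obtain ⟨T, hT1, hT2⟩ : ∃ T, FitsDouble 3 1 (unitPart T s) ∧
      FitsDouble 3 (m - 1) (s - unitPart T s) := by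
    simp only [fitsDouble_three_iff, Pi.sub_apply]
    by_cases h13 : 0 < s (1, 3)
    · refine ⟨[(1, 3)], ?_⟩
      simp [unitPart]
      omega
    by_cases h14 : 0 < s (1, 4)
    · refine ⟨[(1, 4)], ?_⟩
      simp [unitPart]
      omega
    by_cases h23 : 0 < s (2, 3)
    · refine ⟨[(2, 3)], ?_⟩
      simp [unitPart]
      omega
    by_cases h24 : 0 < s (2, 4)
    · refine ⟨[(2, 4)], ?_⟩
      simp [unitPart]
      omega
    · refine ⟨[(1, 5), (3, 3)], ?_⟩
      simp [unitPart]
      omega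
  exact mem_add_of_unitPart h0 T hT1 hT2

theorem exists_peel_four {m : ℕ} {s : ℕ × ℕ → ℕ} (hm : 1 ≤ m) (hs : s ∈ SD 4 4 m) :
    ∃ d, (d = 1 ∨ d = 2) ∧ d ≤ m ∧ s ∈ SD 4 4 d + SD 4 4 (m - d) := by
  obtain ⟨h0, h⟩ := mem_SD_self_iff.1 hs
  rw [fitsDouble_four_iff] at h
  obtain ⟨d, hd, hdm, T, hT1, hT2⟩ : ∃ d, (d = 1 ∨ d = 2) ∧ d ≤ m ∧
      ∃ T, FitsDouble 4 d (unitPart T s) ∧ FitsDouble 4 (m - d) (s - unitPart T s) := by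
    by_cases hall : s (1, 4) = 0 ∧ s (1, 5) = 0 ∧ s (2, 4) = 0 ∧ s (2, 6) = 0 ∧ s (3, 5) = 0 ∧
        0 < s (1, 6) ∧ 0 < s (2, 5) ∧ 0 < s (3, 4)
    · refine ⟨2, .inr rfl, by omega, [(1, 6), (2, 5), (3, 4)], ?_⟩
      simp only [fitsDouble_four_iff, Pi.sub_apply]
      simp [unitPart]
      omega
    refine ⟨1, .inl rfl, hm, ?_⟩
    simp only [fitsDouble_four_iff, Pi.sub_apply]
    by_cases h14 : 0 < s (1, 4)
    · refine ⟨[(1, 4)], ?_⟩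
      simp [unitPart]
      omega
    by_cases h15 : 0 < s (1, 5)
    · refine ⟨[(1, 5)], ?_⟩
      simp [unitPart]
      omega
    by_cases h24 : 0 < s (2, 4)
    · refine ⟨[(2, 4)], ?_⟩
      simp [unitPart]
      omega
    by_cases h26 : 0 < s (2, 6)
    · refine ⟨[(2, 6), (4, 4)], ?_⟩
      simp [unitPart]
      omega
    by_cases h35 : 0 < s (3, 5)
    · refine ⟨[(3, 5), (1, 7)], ?_⟩
      simp [unitPart]
      omega
    by_cases h25 : 0 < s (2, 5)
    · refine ⟨[(2, 5)], ?_⟩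
      simp [unitPart]
      omega
    by_cases h16 : 0 < s (1, 6) ∧ (s (3, 4) = 0 ∨ 0 < s (4, 4) ∨ s (1, 7) = 0)
    · refine ⟨[(1, 6), (4, 4)], ?_⟩
      simp [unitPart]
      omega
    by_cases h34 : 0 < s (3, 4)
    · refine ⟨[(3, 4), (1, 7)], ?_⟩
      simp [unitPart]
      omega
    · refine ⟨[(1, 7), (4, 4)], ?_⟩
      simp [unitPart]
      omega
  exact ⟨d, hd, hdm, mem_add_of_unitPart h0 T hT1 hT2⟩

theorem zero_mem_SD (n i m : ℕ) : (0 : ℕ × ℕ → ℕ) ∈ SD n i m := by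
  have hsum : ∀ L : List (ℕ × ℕ), (L.map (0 : ℕ × ℕ → ℕ)).sum = 0 := fun L => List.sum_map_zero
  exact ⟨fun _ _ => rfl, fun L _ => (hsum L).trans_le (Nat.zero_le _),
    fun L1 L2 _ => (hsum _).trans_le (Nat.zero_le _)⟩

theorem SD_add_subset (n i k l : ℕ) : SD n i k + SD n i l ⊆ SD n i (k + l) := by
  rintro _ ⟨s, ⟨hs0, hs1, hs2⟩, t, ⟨ht0, ht1, ht2⟩, rfl⟩
  have hsum : ∀ L : List (ℕ × ℕ), (L.map (s + t)).sum = (L.map s).sum + (L.map t).sum :=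
    fun L => List.sum_map_add
  refine ⟨fun b hb => ?_, fun L hL => ?_, fun L1 L2 hL => ?_⟩
  · simp [hs0 b hb, ht0 b hb]
  · exact (hsum L).trans_le (add_le_add (hs1 L hL) (ht1 L hL))
  · rw [add_mul]
    exact (hsum _).trans_le (add_le_add (hs2 L1 L2 hL) (ht2 L1 L2 hL))

theorem exists_peel_self {n m : ℕ} {s : ℕ × ℕ → ℕ} (hn : 1 ≤ n) (hn' : n ≤ 4) (hm : 1 ≤ m)
    (hs : s ∈ SD n n m) :
    ∃ d, (d = 1 ∨ d = 2 ∧ 3 ≤ n) ∧ d ≤ m ∧ s ∈ SD n n d + SD n n (m - d) := by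
  obtain rfl | rfl | rfl | rfl : n = 1 ∨ n = 2 ∨ n = 3 ∨ n = 4 := by omega
  · refine ⟨1, .inl rfl, hm, Set.mem_add.2 ⟨s, ?_, 0, zero_mem_SD _ _ _, add_zero s⟩⟩
    refine mem_SD_self_iff.2 ⟨hs.1, fun L1 L2 hL => ?_⟩
    obtain ⟨j, hj1, hj2, -⟩ := hL
    omega
  · exact ⟨1, .inl rfl, hm, exists_peel_two hm hs⟩
  · exact ⟨1, .inl rfl, hm, exists_peel_three hm hs⟩
  · obtain ⟨d, hd, h⟩ := exists_peel_four hm hs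
    exact ⟨d, hd.imp_right fun h => ⟨h, by omega⟩, h⟩

theorem SD_subset_add_epsB {n i : ℕ} (hi1 : 1 ≤ i) (hin : i ≤ n) (hcase : i ≤ 3 ∨ n ≤ 4)
    {m : ℕ} (hm : epsB i ≤ m) : SD n i m ⊆ SD n i (epsB i) + SD n i (m - epsB i) := by
  have hpeel : ∀ m, 1 ≤ m → ∀ s ∈ SD n i m,
      ∃ d, (d = 1 ∨ d = 2 ∧ 3 ≤ i) ∧ d ≤ m ∧ s ∈ SD n i d + SD n i (m - d) := by
    intro m hm s hs
    rcases hin.eq_or_lt with rfl | hlt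
    · exact exists_peel_self hi1 (by omega) hm hs
    · exact exists_peel (u := 2 * (n - i) - 1) hi1 (by omega) (by omega) hm hs
  intro s hs
  unfold epsB at hm ⊢
  split_ifs at hm ⊢ with hi
  · obtain ⟨d, hd, -, h⟩ := hpeel m hm s hs
    obtain rfl : d = 1 := by omega
    exact h
  · obtain ⟨d, hd, -, h⟩ := hpeel m (by omega) s hs
    obtain rfl | rfl : d = 1 ∨ d = 2 := by omega
    · obtain ⟨a, ha, b, hb, rfl⟩ := h
      obtain ⟨e, he, hem, c, hc, f, hf, rfl⟩ := hpeel (m - 1) (by omega) b hb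
      obtain rfl | rfl : e = 1 ∨ e = 2 := by omega
      · exact ⟨a + c, SD_add_subset n i 1 1 ⟨a, ha, c, hc, rfl⟩, f,
          by rwa [show m - 2 = m - 1 - 1 by omega], add_assoc a c f⟩
      · refine ⟨c, hc, a + f, ?_, add_left_comm c a f⟩
        rw [show m - 2 = 1 + (m - 1 - 2) by omega]
        exact SD_add_subset n i _ _ ⟨a, ha, f, hf, rfl⟩
    · exact h

/-- for `1 ≤ i ≤ n` with `i ≤ 3` or `n ≤ 4`, and all `k, l ≥ 0`,
`S(D, (k + ε_i·l)·ω_i) = S(D, k·ω_i) + S(D, ε_i·l·ω_i)`. -/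
theorem SD_eps_minkowski (n i : ℕ) (hi1 : 1 ≤ i) (hin : i ≤ n)
    (hcase : i ≤ 3 ∨ n ≤ 4) (k l : ℕ) :
    SD n i (k + epsB i * l) = SD n i k + SD n i (epsB i * l) := by
  refine (SD_add_subset n i _ _).antisymm' ?_
  induction l with
  | zero =>
    intro s hs
    exact ⟨s, hs, 0, zero_mem_SD n i _, add_zero s⟩
  | succ l ih =>
    intro s hs
    have hle : epsB i ≤ k + epsB i * (l + 1) := by
      rw [mul_add_one]
      omega
    obtain ⟨a, ha, b, hb, rfl⟩ := SD_subset_add_epsB hi1 hin hcase hle hs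
    rw [show k + epsB i * (l + 1) - epsB i = k + epsB i * l by rw [mul_add_one]; omega] at hb
    obtain ⟨c, hc, f, hf, rfl⟩ := ih hb
    refine ⟨c, hc, a + f, ?_, add_left_comm c a f⟩
    rw [mul_add_one, add_comm]
    exact SD_add_subset n i _ _ ⟨a, ha, f, hf, rfl⟩
end

section
/- Define a partial order on R_i^+ by alpha_{j,k} <= alpha_{p,r} iff j >= p and k >= r, and for an integer l set R_i^+(l) := {alpha_{p,q} in R_i^+ : q <= l}. For s in Z_{>=0}^{R_i^+} let T^s be the set of minimal elements (with respect to <=) of {beta in R_i^+(2n-i) : s_beta ≠ 0}, and let t^s in {0,1}^{R_i^+} be the indicator vector of T^s. Statement: let m >= 1 and s in S(D, m*omega_i) be such that either every beta with s_beta ≠ 0 lies in R_i^+(2n-i-1), or (assuming i < n) every beta with s_beta ≠ 0 lies in {alpha_{p,q} : p <= i, i+1 <= q <= 2n-i}. Then s - t^s in S(D, (m-1)*omega_i). -/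
open scoped Pointwise

/-- The set of minimal elements (for the partial order `α_{j,k} ≤ α_{p,r} ↔ j ≥ p ∧ k ≥ r`)
of `{β ∈ R_i^+(2n-i) : s_β ≠ 0}`, where `R_i^+(l) = {α_{p,q} ∈ R_i^+ : q ≤ l}`. -/
def Tmin (n i : ℕ) (s : (ℕ × ℕ) → ℕ) : Set (ℕ × ℕ) :=
  {β | (inR n i β ∧ β.2 ≤ 2 * n - i ∧ s β ≠ 0) ∧
    ∀ γ, (inR n i γ ∧ γ.2 ≤ 2 * n - i ∧ s γ ≠ 0) → β.1 ≤ γ.1 → β.2 ≤ γ.2 → γ = β}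

/-- The indicator multi-exponent `t^s` of the set `T^s` of minimal elements. -/
noncomputable def tmin (n i : ℕ) (s : (ℕ × ℕ) → ℕ) : (ℕ × ℕ) → ℕ :=
  Set.indicator (Tmin n i s) fun _ => 1

/-- A strictly increasing list above `x` and below `y` refines to a path of root steps from `x`
to `y`, and the sum of a nonnegative function does not decrease. -/
theorem exists_rootStep_path_of_lt (s : ℕ × ℕ → ℕ) (y : ℕ × ℕ) (d : ℕ) :
    ∀ (x : ℕ × ℕ) (L : List (ℕ × ℕ)), x ≤ y → (y.1 - x.1) + (y.2 - x.2) = d →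
      (x :: L).Pairwise (· < ·) → (∀ z ∈ L, z ≤ y) →
      ∃ P : List (ℕ × ℕ), (x :: P).IsChain RootStep ∧ (x :: P).getLast? = some y ∧
        (∀ z ∈ x :: P, x ≤ z ∧ z ≤ y) ∧ (L.map s).sum ≤ (P.map s).sum := by
  induction d with
  | zero =>
    intro x L hxy hd hL hLy
    have hx : x = y := by
      have h1 := hxy.1
      have h2 := hxy.2
      ext <;> omega
    subst hx
    have hnil : L = [] := by
      rw [List.eq_nil_iff_forall_not_mem]
      intro z hz
      exact absurd ((List.pairwise_cons.1 hL).1 z hz) (not_lt_of_ge (hLy z hz))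
    subst hnil
    exact ⟨[], by simp, by simp, by simp, by simp⟩
  | succ d ih =>
    intro x L hxy hd hL hLy
    have step : ∀ z : ℕ × ℕ, x < z → z ≤ y → ∃ x', RootStep x x' ∧ x < x' ∧ x' ≤ z ∧
        (y.1 - x'.1) + (y.2 - x'.2) = d := by
      intro z hxz hzy
      have h1 := hzy.1
      have h2 := hzy.2
      rcases Prod.lt_iff.1 hxz with h | h
      · refine ⟨(x.1 + 1, x.2), Or.inr ⟨rfl, rfl⟩, Prod.lt_iff.2 (Or.inl ⟨?_, ?_⟩), ⟨?_, ?_⟩, ?_⟩ <;>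
          simp <;> omega
      · refine ⟨(x.1, x.2 + 1), Or.inl ⟨rfl, rfl⟩, Prod.lt_iff.2 (Or.inr ⟨?_, ?_⟩), ⟨?_, ?_⟩, ?_⟩ <;>
          simp <;> omega
    have extend : ∀ (x' : ℕ × ℕ) (L' : List (ℕ × ℕ)), RootStep x x' → x < x' → x' ≤ y →
        (y.1 - x'.1) + (y.2 - x'.2) = d → (x' :: L').Pairwise (· < ·) → (∀ z ∈ L', z ≤ y) →
        ∃ P : List (ℕ × ℕ), (x :: x' :: P).IsChain RootStep ∧ (x :: x' :: P).getLast? = some y ∧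
          (∀ z ∈ x :: x' :: P, x ≤ z ∧ z ≤ y) ∧ (L'.map s).sum ≤ (P.map s).sum := by
      intro x' L' hstep hlt hle hd' hL' hLy'
      obtain ⟨P, hP, hlast, hmem, hsum⟩ := ih x' L' hle hd' hL' hLy'
      refine ⟨P, List.IsChain.cons_cons hstep hP, by simpa using hlast, ?_, hsum⟩
      intro z hz
      rcases List.mem_cons.1 hz with rfl | hz
      · exact ⟨le_rfl, hxy⟩
      · exact ⟨hlt.le.trans (hmem z hz).1, (hmem z hz).2⟩
    cases L with
    | nil =>
      have hlt : x < y := lt_of_le_of_ne hxy (by rintro rfl; omega)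
      obtain ⟨x', hstep, hlt', hle, hd'⟩ := step y hlt le_rfl
      obtain ⟨P, hP, hlast, hmem, -⟩ := extend x' [] hstep hlt' hle hd' (by simp) (by simp)
      exact ⟨x' :: P, hP, hlast, hmem, by simp⟩
    | cons z L =>
      have hpw := List.pairwise_cons.1 hL
      have hpw' := List.pairwise_cons.1 hpw.2
      have hzy : z ≤ y := hLy z (by simp)
      obtain ⟨x', hstep, hlt', hle, hd'⟩ := step z (hpw.1 z (by simp)) hzy
      rcases eq_or_lt_of_le hle with rfl | hlt
      · obtain ⟨P, hP, hlast, hmem, hsum⟩ :=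
          extend x' L hstep hlt' hzy hd' hpw.2 fun w hw => hLy w (by simp [hw])
        exact ⟨x' :: P, hP, hlast, hmem, by simpa using hsum⟩
      · have hL' : (x' :: z :: L).Pairwise (· < ·) := by
          refine List.pairwise_cons.2 ⟨fun w hw => ?_, hpw.2⟩
          rcases List.mem_cons.1 hw with rfl | hw
          · exact hlt
          · exact hlt.trans (hpw'.1 w hw)
        obtain ⟨P, hP, hlast, hmem, hsum⟩ :=
          extend x' (z :: L) hstep hlt' (hle.trans hzy) hd' hL' hLy
        refine ⟨x' :: P, hP, hlast, hmem, ?_⟩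
        simp only [List.map_cons, List.sum_cons] at hsum ⊢
        omega

/-- A strictly increasing list in the box `[x, y]` is dominated by a path of root steps from `x`
to `y` inside that box. -/
theorem exists_rootStep_path (s : ℕ × ℕ → ℕ) {x y : ℕ × ℕ} (hxy : x ≤ y) (L : List (ℕ × ℕ))
    (hL : L.Pairwise (· < ·)) (hbox : ∀ z ∈ L, x ≤ z ∧ z ≤ y) :
    ∃ P : List (ℕ × ℕ), P.IsChain RootStep ∧ P.head? = some x ∧ P.getLast? = some y ∧
      (∀ z ∈ P, x ≤ z ∧ z ≤ y) ∧ (L.map s).sum ≤ (P.map s).sum := by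
  have above : ∀ L' : List (ℕ × ℕ), (x :: L').Pairwise (· < ·) → (∀ z ∈ L', z ≤ y) →
      ∃ P : List (ℕ × ℕ), P.IsChain RootStep ∧ P.head? = some x ∧ P.getLast? = some y ∧
      (∀ z ∈ P, x ≤ z ∧ z ≤ y) ∧ s x + (L'.map s).sum ≤ (P.map s).sum := by
    intro L' hL' hy
    obtain ⟨P, hP, hlast, hmem, hsum⟩ := exists_rootStep_path_of_lt s y _ x L' hxy rfl hL' hy
    exact ⟨x :: P, hP, rfl, hlast, hmem, by simpa using hsum⟩
  by_cases hx : ∀ z ∈ L, x < z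
  · obtain ⟨P, hP, hhead, hlast, hmem, hsum⟩ :=
      above L (List.pairwise_cons.2 ⟨hx, hL⟩) fun z hz => (hbox z hz).2
    exact ⟨P, hP, hhead, hlast, hmem, by omega⟩
  · cases L with
    | nil => simp at hx
    | cons z L =>
      have hpw := List.pairwise_cons.1 hL
      have hzx : z = x := by
        by_contra hne
        have hlt : x < z := lt_of_le_of_ne (hbox z (by simp)).1 (Ne.symm hne)
        refine hx fun w hw => ?_
        rcases List.mem_cons.1 hw with rfl | hw
        · exact hlt
        · exact hlt.trans (hpw.1 w hw)
      subst hzx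
      simpa using above L hL fun w hw => (hbox w (by simp [hw])).2

theorem RootStep.lt {a b : ℕ × ℕ} (h : RootStep a b) : a < b := by
  rcases h with h | h
  · exact Prod.lt_iff.2 (Or.inr ⟨by omega, by omega⟩)
  · exact Prod.lt_iff.2 (Or.inl ⟨by omega, by omega⟩)

/-- Discarding the zeros of a function from a list does not change its sum. -/
theorem sum_map_filter_ne_zero {α : Type*} (u : α → ℕ) (L : List α) :
    ((L.filter fun z => u z ≠ 0).map u).sum = (L.map u).sum := by
  induction L with
  | nil => rfl
  | cons z L ih =>
    by_cases h : u z = 0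
    · simpa [List.filter_cons, h] using ih
    · simpa [List.filter_cons, h] using ih

/-- If all increasing lists have `s`-sum at most `m`, and `T` consists of elements of the support
of `s` with every element of the support below one of `T`, then subtracting the indicator of `T`
lowers the bound by one. -/
theorem sum_map_sub_indicator_le {α : Type*} [PartialOrder α] {s : α → ℕ} {m : ℕ} {T : Set α}
    (hT : ∀ β ∈ T, s β ≠ 0) (hcover : ∀ β, s β ≠ 0 → ∃ τ ∈ T, β ≤ τ)
    (hbound : ∀ L : List α, L.Pairwise (· < ·) → (∀ z ∈ L, s z ≠ 0) → (L.map s).sum ≤ m)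
    (L : List α) (hL : L.Pairwise (· < ·)) :
    (L.map fun β => s β - T.indicator (fun _ => 1) β).sum ≤ m - 1 := by
  set u : α → ℕ := fun β => s β - T.indicator (fun _ => 1) β with hu
  have hus : ∀ β, u β ≤ s β := fun β => Nat.sub_le _ _
  rw [← sum_map_filter_ne_zero]
  set F := L.filter fun z => u z ≠ 0 with hF
  have hFpw : F.Pairwise (· < ·) := hL.filter _
  have hFs : ∀ z ∈ F, s z ≠ 0 := by
    intro z hz
    have h0 : u z ≠ 0 := by simpa using (List.mem_filter.1 hz).2
    have := hus z
    omega
  clear_value F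
  rcases List.eq_nil_or_concat F with rfl | ⟨G, β, rfl⟩
  · simp
  have hle : (G.map u).sum ≤ (G.map s).sum := List.sum_le_sum fun z _ => hus z
  have hβ : s β ≠ 0 := hFs β (by simp)
  have hsub := hbound _ hFpw hFs
  obtain ⟨τ, hτ, hβτ⟩ := hcover β hβ
  rcases eq_or_lt_of_le hβτ with rfl | hlt
  · have huβ : u β = s β - 1 := by simp [hu, hτ]
    simp at hsub ⊢
    omega
  · have hlong : ((G ++ [β] ++ [τ]).map s).sum ≤ m := by
      refine hbound _ (List.pairwise_append.2 ⟨by simpa using hFpw, by simp, ?_⟩) ?_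
      · intro a ha b hb
        rw [List.mem_singleton] at hb
        subst hb
        rcases List.mem_append.1 ha with ha | ha
        · refine lt_trans ?_ hlt
          exact (List.pairwise_append.1 (by simpa using hFpw)).2.2 a ha β (by simp)
        · rw [List.mem_singleton] at ha
          exact ha ▸ hlt
      · intro z hz
        rcases List.mem_append.1 hz with hz | hz
        · exact hFs z (by simpa using hz)
        · rw [List.mem_singleton] at hz
          exact hz ▸ hT τ hτ
    have hτ0 := hT τ hτ
    have := hus β
    simp at hlong ⊢
    omega

/-- if `s ∈ S(D, m·ω_i)` is supported on `R_i^+(2n-i-1)`, or (for `i < n`)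
on `{α_{p,q} : p ≤ i, i+1 ≤ q ≤ 2n-i}`, then `s - t^s ∈ S(D, (m-1)·ω_i)`. -/
theorem SD_sub_min (n i : ℕ) (hi1 : 1 ≤ i) (hin : i ≤ n) (m : ℕ) (hm : 1 ≤ m)
    (s : (ℕ × ℕ) → ℕ) (hs : s ∈ SD n i m)
    (hsupp :
      (∀ β, s β ≠ 0 → inR n i β ∧ β.2 ≤ 2 * n - i - 1) ∨
      (i < n ∧ ∀ β, s β ≠ 0 → β.1 ≤ i ∧ i + 1 ≤ β.2 ∧ β.2 ≤ 2 * n - i)) :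
    (fun β => s β - tmin n i s β) ∈ SD n i (m - 1) := by
  obtain ⟨hs0, hs1, -⟩ := hs
  have hR : ∀ β, s β ≠ 0 → inR n i β := fun β h => by
    by_contra hn
    exact h (hs0 β hn)
  have hcol : ∀ β, s β ≠ 0 → β.2 ≤ 2 * n - i := by
    intro β hβ
    rcases hsupp with h | ⟨-, h⟩
    · have := (h β hβ).2
      omega
    · exact (h β hβ).2.2
  have hcover : ∀ β, s β ≠ 0 → ∃ τ ∈ Tmin n i s, β ≤ τ := by
    intro β hβ
    have hfin : {γ | s γ ≠ 0}.Finite := by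
      refine (Set.finite_Icc (0, 0) (i, 2 * n - i)).subset fun γ hγ => ?_
      exact ⟨⟨Nat.zero_le _, Nat.zero_le _⟩, (hR γ hγ).2.1, hcol γ hγ⟩
    obtain ⟨τ, hβτ, hτ⟩ := hfin.exists_le_maximal hβ
    refine ⟨τ, ⟨⟨hR τ hτ.1, hcol τ hτ.1, hτ.1⟩, fun γ hγ h1 h2 => ?_⟩, hβτ⟩
    exact le_antisymm (hτ.2 hγ.2.2 ⟨h1, h2⟩) ⟨h1, h2⟩
  have hbound : ∀ L : List (ℕ × ℕ), L.Pairwise (· < ·) → (∀ z ∈ L, s z ≠ 0) →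
      (L.map s).sum ≤ m := by
    intro L hL hLs
    rcases L.eq_nil_or_concat with rfl | ⟨G, β₀, hG⟩
    · simp
    have hβ₀ : s β₀ ≠ 0 := hLs β₀ (by simp [hG])
    rcases hsupp with h | ⟨hlt, h⟩
    · have hbox : ∀ z, s z ≠ 0 → ((1, i) : ℕ × ℕ) ≤ z ∧ z ≤ (i, 2 * n - i - 1) := fun z hz =>
        ⟨⟨(hR z hz).1, (hR z hz).2.2.1⟩, (hR z hz).2.1, (h z hz).2⟩
      obtain ⟨P, hP, hhead, hlast, hmem, hsum⟩ := exists_rootStep_path s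
        ((hbox β₀ hβ₀).1.trans (hbox β₀ hβ₀).2) L hL fun z hz => hbox z (hLs z hz)
      refine hsum.trans (hs1 P ⟨?_, hP, fun z hz => ?_, Or.inl ⟨hhead, hlast⟩⟩)
      · rintro rfl
        simp at hhead
      · obtain ⟨⟨h1, h2⟩, h3, h4⟩ := hmem z hz
        simp only at h1 h2 h3 h4
        exact ⟨h1, h3, h2, by omega⟩
    · have hbox : ∀ z, s z ≠ 0 → ((1, i + 1) : ℕ × ℕ) ≤ z ∧ z ≤ (i, 2 * n - i) := fun z hz =>
        ⟨⟨(hR z hz).1, (h z hz).2.1⟩, (hR z hz).2.1, (h z hz).2.2⟩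
      obtain ⟨P, hP, hhead, hlast, hmem, hsum⟩ := exists_rootStep_path s
        ((hbox β₀ hβ₀).1.trans (hbox β₀ hβ₀).2) L hL fun z hz => hbox z (hLs z hz)
      refine hsum.trans (hs1 P ⟨?_, hP, fun z hz => ?_, Or.inr ⟨hhead, hlast⟩⟩)
      · rintro rfl
        simp at hhead
      · obtain ⟨⟨h1, h2⟩, h3, h4⟩ := hmem z hz
        simp only at h1 h2 h3 h4
        exact ⟨h1, h3, by omega, by omega⟩
  have hpath : ∀ L : List (ℕ × ℕ), L.IsChain RootStep →
      (L.map fun β => s β - tmin n i s β).sum ≤ m - 1 := fun L hL =>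
    sum_map_sub_indicator_le (T := Tmin n i s) (fun β hβ => hβ.1.2.2) hcover hbound L
      (List.isChain_iff_pairwise.1 (hL.imp fun _ _ h => h.lt))
  refine ⟨fun β hβ => ?_, fun L hL => hpath L hL.2.1, ?_⟩
  · simp [hs0 β hβ]
  · rintro L1 L2 ⟨j, hj1, hji, -, -, hL1, hL2, -⟩
    rcases eq_or_ne i n with rfl | hne
    · have hzero : ∀ β, s β = 0 := by
        intro β
        by_contra hβ
        rcases hsupp with h | ⟨h, -⟩
        · obtain ⟨⟨-, -, h1, -⟩, h2⟩ := h β hβ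
          omega
        · omega
      simp [hzero]
    · have hc : cB n i = 2 := by
        rw [cB, if_neg (by omega)]
      have h1 := hpath L1 hL1
      have h2 := hpath L2 hL2
      rw [hc, List.map_append, List.sum_append]
      omega
end

section
/- Let n = 4 and i = 4, and let s in Z_{>=0}^{R_4^+} be the vector with s_beta = 1 for beta in {alpha_{1,6}, alpha_{2,5}, alpha_{3,4}} and s_beta = 0 for all other beta. Then s belongs to S(D, 2*omega_4), but s does not belong to the Minkowski sum S(D, omega_4) + S(D, omega_4). -/
open scoped Pointwise

/-- Along a path the height `p + q` is strictly increasing, so a path starting above height `r`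
avoids any function supported in height `r`. -/
lemma sum_map_eq_zero_of_isChain {s : ℕ × ℕ → ℕ} {r : ℕ}
    (hs : ∀ β, β.1 + β.2 ≠ r → s β = 0) :
    ∀ (L : List (ℕ × ℕ)) (a : ℕ × ℕ), (a :: L).IsChain RootStep → r < a.1 + a.2 →
      ((a :: L).map s).sum = 0
  | [], a, _, ha => by simp [hs a ha.ne']
  | b :: L, a, h, ha => by
    rw [List.isChain_cons_cons] at h
    have hb : r < b.1 + b.2 := by
      have := h.1
      unfold RootStep at this
      omega
    rw [List.map_cons, List.sum_cons, hs a ha.ne', sum_map_eq_zero_of_isChain hs L b h.2 hb]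

/-- A path meets each height at most once. -/
lemma sum_map_le_one_of_isChain {s : ℕ × ℕ → ℕ} {r : ℕ}
    (hs : ∀ β, β.1 + β.2 ≠ r → s β = 0) (hs_le : ∀ β, s β ≤ 1) :
    ∀ L : List (ℕ × ℕ), L.IsChain RootStep → (L.map s).sum ≤ 1
  | [], _ => by simp
  | [a], _ => by simpa using hs_le a
  | a :: b :: L, h => by
    rw [List.isChain_cons_cons] at h
    rw [List.map_cons, List.sum_cons]
    by_cases ha : a.1 + a.2 = r
    · have hb : r < b.1 + b.2 := by
        have := h.1
        unfold RootStep at this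
        omega
      rw [sum_map_eq_zero_of_isChain hs L b h.2 hb]
      exact hs_le a
    · rw [hs a ha, zero_add]
      exact sum_map_le_one_of_isChain hs hs_le (b :: L) h.2

/-- There are no type 1 Dyck paths for `n = i = 4`. -/
lemma not_isType1_four (L : List (ℕ × ℕ)) : ¬ IsType1 4 4 L := by
  rintro ⟨-, hchain, hR, ⟨-, hlast⟩ | ⟨hhead, hlast⟩⟩
  · have := hR _ (List.mem_of_getLast? hlast)
    simp [inR] at this
  · cases L with
    | nil => simp at hhead
    | cons a L =>
      obtain rfl : a = (1, 5) := by simpa using hhead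
      have hmono : ∀ x ∈ (1, 5) :: L, 5 ≤ x.2 := by
        refine hchain.induction (fun x => 5 ≤ x.2) _ ?_ ?_
        · intro x y hxy hx
          unfold RootStep at hxy
          omega
        · simp
      have := hmono _ (List.mem_of_getLast? hlast)
      simp at this

set_option linter.deprecated false in
/-- Any two of the roots `α_{1,6}, α_{2,5}, α_{3,4}` lie on a common double Dyck path. -/
lemma pairwise_le_one_of_mem_SD {a : ℕ × ℕ → ℕ} (ha : a ∈ SD 4 4 1) :
    a (1, 6) + a (2, 5) ≤ 1 ∧ a (2, 5) + a (3, 4) ≤ 1 ∧ a (1, 6) + a (3, 4) ≤ 1 := by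
  obtain ⟨-, -, h⟩ := ha
  have h₁ := h [(1, 4), (1, 5), (1, 6), (1, 7)] [(2, 4), (2, 5), (2, 6)]
    ⟨1, by simp [List.Chain', RootStep, inR]⟩
  have h₂ := h [(1, 4), (1, 5), (2, 5), (2, 6)] [(2, 4), (3, 4), (3, 5)]
    ⟨2, by simp [List.Chain', RootStep, inR]⟩
  have h₃ := h [(1, 4), (1, 5), (1, 6), (2, 6)] [(2, 4), (3, 4), (3, 5)]
    ⟨2, by simp [List.Chain', RootStep, inR]⟩
  simp [cB] at h₁ h₂ h₃
  omega

/-- for `n = 4`, `i = 4`, the multi-exponent with value `1` exactly at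
`α_{1,6}, α_{2,5}, α_{3,4}` lies in `S(D, 2·ω₄)` but not in `S(D, ω₄) + S(D, ω₄)`. -/
theorem SD_counterexample_i4 :
    (fun β => if β = (1, 6) ∨ β = (2, 5) ∨ β = (3, 4) then 1 else 0) ∈ SD 4 4 2 ∧
    (fun β => if β = (1, 6) ∨ β = (2, 5) ∨ β = (3, 4) then 1 else 0) ∉
      SD 4 4 1 + SD 4 4 1 := by
  constructor
  · refine ⟨?_, fun L hL => absurd hL (not_isType1_four L), ?_⟩
    · intro β hβ
      refine if_neg ?_
      rintro (rfl | rfl | rfl) <;> simp [inR] at hβ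
    · rintro L1 L2 ⟨j, -, -, -, -, hL1, hL2, -⟩
      have hle := sum_map_le_one_of_isChain (r := 7)
        (s := fun β => if β = (1, 6) ∨ β = (2, 5) ∨ β = (3, 4) then 1 else 0)
        (fun β hβ => if_neg (by rintro (rfl | rfl | rfl) <;> simp at hβ))
        (fun β => by split_ifs <;> simp)
      have h₁ := hle L1 hL1
      have h₂ := hle L2 hL2
      rw [List.map_append, List.sum_append]
      simp only [cB]
      norm_num
      omega
  · rintro ⟨a, ha, b, hb, hab⟩
    have ha' := pairwise_le_one_of_mem_SD ha
    have hb' := pairwise_le_one_of_mem_SD hb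
    have h₁ := congrFun hab (1, 6)
    have h₂ := congrFun hab (2, 5)
    have h₃ := congrFun hab (3, 4)
    simp at h₁ h₂ h₃
    omega
end

section
/- Let n = 4 and i = 3, and let s in Z_{>=0}^{R_3^+} be the vector with s_beta = 1 for beta in {alpha_{1,3}, alpha_{1,4}, alpha_{1,6}, alpha_{2,5}, alpha_{3,3}} and s_beta = 0 for all other beta. Then s belongs to S(D, 2*omega_3), but s does not belong to the Minkowski sum S(D, omega_3) + S(D, omega_3). -/
open scoped Pointwise

/-- All lists of roots obtained from the root `a` by performing `k` Dyck path steps. -/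
def stepLists : ℕ → ℕ × ℕ → List (List (ℕ × ℕ))
  | 0, a => [[a]]
  | k + 1, a =>
    (stepLists k (a.1, a.2 + 1) ++ stepLists k (a.1 + 1, a.2)).map (a :: ·)

theorem mem_stepLists_of_isChain {t : List (ℕ × ℕ)} {a : ℕ × ℕ}
    (h : (a :: t).IsChain RootStep) : a :: t ∈ stepLists t.length a := by
  induction t generalizing a with
  | nil => simp [stepLists]
  | cons b t ih =>
    rw [List.isChain_cons_cons] at h
    obtain ⟨hab, ht⟩ := h
    have hb := ih ht
    simp only [List.length_cons, stepLists, List.mem_map, List.mem_append]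
    refine ⟨b :: t, ?_, rfl⟩
    rcases hab with hab | hab
    · exact Or.inl (by rwa [← hab.1, ← hab.2])
    · exact Or.inr (by rwa [← hab.1, ← hab.2])

theorem getLast?_height_of_isChain {t : List (ℕ × ℕ)} {a b : ℕ × ℕ}
    (h : (a :: t).IsChain RootStep) (hb : (a :: t).getLast? = some b) :
    b.1 + b.2 = a.1 + a.2 + t.length := by
  induction t generalizing a with
  | nil => simp_all
  | cons c t ih =>
    rw [List.isChain_cons_cons] at h
    rw [List.getLast?_cons_cons] at hb
    have hc := ih h.2 hb
    have hac := h.1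
    simp only [RootStep] at hac
    simp only [List.length_cons]
    omega

/-- A path from `a` to `b` is among the lists of `k` steps, `k` being the height difference. -/
theorem mem_stepLists {L : List (ℕ × ℕ)} {a b : ℕ × ℕ} (k : ℕ)
    (h : L.IsChain RootStep) (ha : L.head? = some a) (hb : L.getLast? = some b)
    (hk : b.1 + b.2 = a.1 + a.2 + k) : L ∈ stepLists k a := by
  cases L with
  | nil => simp at ha
  | cons c t =>
    obtain rfl : c = a := by simpa using ha
    have ht := getLast?_height_of_isChain h hb
    obtain rfl : t.length = k := by omega
    exact mem_stepLists_of_isChain h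

/-- The indicator of `α_{1,3}, α_{1,4}, α_{1,6}, α_{2,5}, α_{3,3}`. -/
def fiveRoots (β : ℕ × ℕ) : ℕ :=
  if β = (1, 3) ∨ β = (1, 4) ∨ β = (1, 6) ∨ β = (2, 5) ∨ β = (3, 3) then 1 else 0

theorem fiveRoots_mem_SD : fiveRoots ∈ SD 4 3 2 := by
  refine ⟨?_, ?_, ?_⟩
  · intro β hβ
    rw [fiveRoots, if_neg]
    rintro (rfl | rfl | rfl | rfl | rfl) <;> exact hβ (by simp [inR])
  · rintro L ⟨-, hL, -, ⟨ha, hb⟩ | ⟨ha, hb⟩⟩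
    · have key : ∀ L ∈ stepLists 3 (1, 3), L.getLast? = some (3, 4) →
          (L.map fiveRoots).sum ≤ 2 := by decide
      exact key L (mem_stepLists 3 hL ha hb rfl) hb
    · have key : ∀ L ∈ stepLists 3 (1, 4), L.getLast? = some (3, 5) →
          (L.map fiveRoots).sum ≤ 2 := by decide
      exact key L (mem_stepLists 3 hL ha hb rfl) hb
  · rintro L1 L2 ⟨j, hj1, hj3, -, -, h1, h2, -, -, ha1, ha2, hb1, hb2, -⟩
    have key1 : ∀ L ∈ stepLists 4 (1, 3), (L.map fiveRoots).sum ≤ 3 := by decide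
    have key2 : ∀ L ∈ stepLists 3 (2, 3), (L.map fiveRoots).sum ≤ 1 := by decide
    have m1 := key1 L1 (mem_stepLists 4 h1 ha1 hb1 (by simp only; omega))
    have m2 := key2 L2 (mem_stepLists 3 h2 ha2 hb2 (by simp only; omega))
    rw [List.map_append, List.sum_append]
    exact (Nat.add_le_add m1 m2).trans (by decide)

/-- The constraints cut out by five Dyck paths on the points of `S(D, ω₃)`. -/
theorem le_of_mem_SD {s : ℕ × ℕ → ℕ} (hs : s ∈ SD 4 3 1) :
    s (1, 3) + s (1, 4) ≤ 1 ∧ s (1, 3) + s (3, 3) ≤ 1 ∧ s (1, 4) + s (2, 5) ≤ 1 ∧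
      s (1, 3) + s (1, 6) + s (2, 5) ≤ 2 ∧ s (1, 4) + s (1, 6) + s (3, 3) ≤ 2 := by
  obtain ⟨-, h1, h2⟩ := hs
  have e1 := h1 [(1, 3), (1, 4), (2, 4), (3, 4)] (by simp [IsType1, List.Chain', RootStep, inR])
  have e2 := h1 [(1, 3), (2, 3), (3, 3), (3, 4)] (by simp [IsType1, List.Chain', RootStep, inR])
  have e3 := h1 [(1, 4), (1, 5), (2, 5), (3, 5)] (by simp [IsType1, List.Chain', RootStep, inR])
  have e4 := h2 [(1, 3), (1, 4), (1, 5), (1, 6), (1, 7)] [(2, 3), (2, 4), (2, 5), (2, 6)]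
    ⟨1, by simp [List.Chain', RootStep, inR]⟩
  have e5 := h2 [(1, 3), (1, 4), (1, 5), (1, 6), (2, 6)] [(2, 3), (3, 3), (3, 4), (3, 5)]
    ⟨2, by simp [List.Chain', RootStep, inR]⟩
  have hc : cB 4 3 = 2 := rfl
  simp only [List.map_cons, List.map_nil, List.cons_append, List.nil_append, List.sum_cons,
    List.sum_nil, hc] at e1 e2 e3 e4 e5
  omega

theorem fiveRoots_notMem_add : fiveRoots ∉ SD 4 3 1 + SD 4 3 1 := by
  rintro ⟨a, ha, b, hb, hab⟩
  have ea := le_of_mem_SD ha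
  have eb := le_of_mem_SD hb
  have h13 : a (1, 3) + b (1, 3) = 1 := congrFun hab (1, 3)
  have h14 : a (1, 4) + b (1, 4) = 1 := congrFun hab (1, 4)
  have h16 : a (1, 6) + b (1, 6) = 1 := congrFun hab (1, 6)
  have h25 : a (2, 5) + b (2, 5) = 1 := congrFun hab (2, 5)
  have h33 : a (3, 3) + b (3, 3) = 1 := congrFun hab (3, 3)
  omega

/-- for `n = 4`, `i = 3`, the multi-exponent with value `1` exactly at
`α_{1,3}, α_{1,4}, α_{1,6}, α_{2,5}, α_{3,3}` lies in `S(D, 2·ω₃)` but not in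
`S(D, ω₃) + S(D, ω₃)`. -/
theorem SD_counterexample_i3 :
    (fun β => if β = (1, 3) ∨ β = (1, 4) ∨ β = (1, 6) ∨ β = (2, 5) ∨ β = (3, 3)
      then 1 else 0) ∈ SD 4 3 2 ∧
    (fun β => if β = (1, 3) ∨ β = (1, 4) ∨ β = (1, 6) ∨ β = (2, 5) ∨ β = (3, 3)
      then 1 else 0) ∉ SD 4 3 1 + SD 4 3 1 := by
  exact ⟨fiveRoots_mem_SD, fiveRoots_notMem_add⟩
end

section
/- Let n >= 2 and m >= 0 be integers. The number of vectors s = (s_1, ..., s_{2n-1}) in Z_{>=0}^{2n-1} with s_1 + ... + s_{2n-2} <= m and s_2 + ... + s_{2n-1} <= m equals choose(2n+m, m) - choose(2n+m-2, m-2), where choose(a,b) := 0 when b < 0. (Equivalently, |S(D, m*omega_1)| for type B_n equals the dimension of the irreducible so_{2n+1}-module with highest weight m*omega_1.) -/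
open scoped Pointwise

theorem ncard_sum_le (d m : ℕ) :
    {s : Fin d → ℕ | ∑ j, s j ≤ m}.ncard = (d + m).choose m := by
  have h := Finset.card_finsuppAntidiag_nat_eq_choose (s := (Finset.univ : Finset (Fin (d + 1)))) m
  rw [Finset.card_fin, show d + 1 + m - 1 = d + m by omega] at h
  rw [← h, ← Set.ncard_coe_finset]
  refine Set.ncard_congr
    (fun s _ => Finsupp.equivFunOnFinite.symm (Fin.cons (m - ∑ j, s j) s : Fin (d + 1) → ℕ))
    ?_ ?_ ?_
  · intro s hs
    have hs' : ∑ j, s j ≤ m := hs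
    simp only [Finset.mem_coe, Finset.mem_finsuppAntidiag, Finset.subset_univ, and_true,
      Finsupp.equivFunOnFinite_symm_apply_apply, Fin.sum_univ_succ, Fin.cons_zero, Fin.cons_succ]
    omega
  · intro s t _ _ hst
    exact (Fin.cons_inj.mp (Finsupp.equivFunOnFinite.symm.injective hst)).2
  · intro u hu
    have hu' : u 0 + ∑ j : Fin d, u j.succ = m := by
      simpa [Fin.sum_univ_succ] using hu
    refine ⟨fun j => u j.succ, ?_, ?_⟩
    · change ∑ j : Fin d, u j.succ ≤ m
      omega
    · ext j
      refine Fin.cases ?_ (fun j => ?_) j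
      · simp only [Finsupp.equivFunOnFinite_symm_apply_apply, Fin.cons_zero]
        omega
      · simp

theorem finite_sum_le (d m : ℕ) : {s : Fin d → ℕ | ∑ j, s j ≤ m}.Finite :=
  (Set.finite_Iic fun _ : Fin d => m).subset fun s hs j =>
    (Finset.single_le_sum (f := s) (fun _ _ => Nat.zero_le _) (Finset.mem_univ j)).trans hs

theorem Fin.sum_univ_eq_zero_add_mid_add_last {k : ℕ} (s : Fin (k + 2) → ℕ) :
    ∑ j, s j = s 0 + ∑ j : Fin k, s j.castSucc.succ + s (Fin.last (k + 1)) := by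
  rw [Fin.sum_univ_succ, Fin.sum_univ_castSucc, ← add_assoc, Fin.succ_last]

/-- The vectors whose first entry dominates the last one are counted by subtracting the last entry
from the first. -/
theorem ncard_last_le_first (k m : ℕ) :
    {s : Fin (k + 2) → ℕ | s 0 + ∑ j : Fin k, s j.castSucc.succ ≤ m ∧
      s (Fin.last (k + 1)) ≤ s 0}.ncard = {s : Fin (k + 2) → ℕ | ∑ j, s j ≤ m}.ncard := by
  have hne : Fin.last (k + 1) ≠ 0 := Fin.last_pos.ne'
  have hmid (j : Fin k) : j.castSucc.succ ≠ 0 := Fin.succ_ne_zero _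
  refine Set.BijOn.ncard_eq (f := fun s => Function.update s 0 (s 0 - s (Fin.last (k + 1))))
    ⟨?_, ?_, ?_⟩
  · rintro s ⟨h₁, h₂⟩
    simp only [Set.mem_ofPred_eq, Fin.sum_univ_eq_zero_add_mid_add_last, Function.update_self,
      Function.update_of_ne hne, Function.update_of_ne (hmid _)]
    omega
  · rintro s ⟨_, hs⟩ t ⟨_, ht⟩ hst
    have hst' (j : Fin (k + 2)) := congrFun hst j
    have hoff (j : Fin (k + 2)) (hj : j ≠ 0) : s j = t j := by
      simpa [hj] using hst' j
    have hzero := hst' 0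
    simp only [Function.update_self] at hzero
    have hlast := hoff _ hne
    funext j
    rcases eq_or_ne j 0 with rfl | hj
    · omega
    · exact hoff j hj
  · intro u hu
    refine ⟨Function.update u 0 (u 0 + u (Fin.last (k + 1))), ?_, ?_⟩
    · simp only [Set.mem_ofPred_eq, Fin.sum_univ_eq_zero_add_mid_add_last] at hu
      simp only [Set.mem_ofPred_eq, Function.update_self,
        Function.update_of_ne hne, Function.update_of_ne (hmid _)]
      omega
    · simp [hne]

/-- The vectors whose last entry exceeds the first one are counted by subtracting the first entry
plus one from the last. -/
theorem ncard_first_lt_last (k m : ℕ) :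
    {s : Fin (k + 2) → ℕ | ∑ j : Fin k, s j.castSucc.succ + s (Fin.last (k + 1)) ≤ m ∧
      s 0 < s (Fin.last (k + 1))}.ncard = {s : Fin (k + 2) → ℕ | ∑ j, s j < m}.ncard := by
  have hne : 0 ≠ Fin.last (k + 1) := Fin.last_pos.ne
  have hmid (j : Fin k) : j.castSucc.succ ≠ Fin.last (k + 1) := by
    simp [Fin.ext_iff, j.isLt.ne]
  refine Set.BijOn.ncard_eq
    (f := fun s => Function.update s (Fin.last (k + 1)) (s (Fin.last (k + 1)) - s 0 - 1))
    ⟨?_, ?_, ?_⟩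
  · rintro s ⟨h₁, h₂⟩
    simp only [Set.mem_ofPred_eq, Fin.sum_univ_eq_zero_add_mid_add_last, Function.update_self,
      Function.update_of_ne hne, Function.update_of_ne (hmid _)]
    omega
  · rintro s ⟨_, hs⟩ t ⟨_, ht⟩ hst
    have hst' (j : Fin (k + 2)) := congrFun hst j
    have hoff (j : Fin (k + 2)) (hj : j ≠ Fin.last (k + 1)) : s j = t j := by
      simpa [hj] using hst' j
    have hlast := hst' (Fin.last (k + 1))
    simp only [Function.update_self] at hlast
    have hzero := hoff _ hne
    funext j
    rcases eq_or_ne j (Fin.last (k + 1)) with rfl | hj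
    · omega
    · exact hoff j hj
  · intro u hu
    refine ⟨Function.update u (Fin.last (k + 1)) (u 0 + u (Fin.last (k + 1)) + 1), ?_, ?_⟩
    · simp only [Set.mem_ofPred_eq, Fin.sum_univ_eq_zero_add_mid_add_last] at hu
      simp only [Set.mem_ofPred_eq, Function.update_self,
        Function.update_of_ne hne, Function.update_of_ne (hmid _)]
      omega
    · have hsub : u 0 + u (Fin.last (k + 1)) + 1 - u 0 - 1 = u (Fin.last (k + 1)) := by omega
      simp [hne, hsub]

theorem ncard_two_sums_le (k m : ℕ) :
    {s : Fin (k + 2) → ℕ | s 0 + ∑ j : Fin k, s j.castSucc.succ ≤ m ∧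
      ∑ j : Fin k, s j.castSucc.succ + s (Fin.last (k + 1)) ≤ m}.ncard =
      {s : Fin (k + 2) → ℕ | ∑ j, s j ≤ m}.ncard +
        {s : Fin (k + 2) → ℕ | ∑ j, s j < m}.ncard := by
  rw [← ncard_last_le_first, ← ncard_first_lt_last, ← Set.ncard_union_eq ?_ ?_ ?_]
  · congr 1
    ext s
    simp only [Set.mem_ofPred_eq, Set.mem_union]
    omega
  · rw [Set.disjoint_left]
    rintro s ⟨_, h₁⟩ ⟨_, h₂⟩
    omega
  · refine (finite_sum_le (k + 2) (2 * m)).subset ?_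
    rintro s ⟨h₁, h₂⟩
    simp only [Set.mem_ofPred_eq, Fin.sum_univ_eq_zero_add_mid_add_last]
    omega
  · refine (finite_sum_le (k + 2) (2 * m)).subset ?_
    rintro s ⟨h₁, h₂⟩
    simp only [Set.mem_ofPred_eq, Fin.sum_univ_eq_zero_add_mid_add_last]
    omega

theorem Fin.sum_filter_lt_last {k : ℕ} (s : Fin (k + 2) → ℕ) :
    ∑ j ∈ Finset.univ.filter (fun j : Fin (k + 2) => (j : ℕ) < k + 1), s j =
      s 0 + ∑ j : Fin k, s j.castSucc.succ := by
  rw [Finset.sum_filter, Fin.sum_univ_eq_zero_add_mid_add_last]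
  simp

theorem Fin.sum_filter_one_le {k : ℕ} (s : Fin (k + 2) → ℕ) :
    ∑ j ∈ Finset.univ.filter (fun j : Fin (k + 2) => 1 ≤ (j : ℕ)), s j =
      ∑ j : Fin k, s j.castSucc.succ + s (Fin.last (k + 1)) := by
  rw [Finset.sum_filter, Fin.sum_univ_eq_zero_add_mid_add_last]
  simp

theorem choose_add_ncard_sum_lt (d m : ℕ) :
    (d + m).choose m + {s : Fin d → ℕ | ∑ j, s j < m}.ncard =
      (d + 1 + m).choose m - (if 2 ≤ m then (d + 1 + m - 2).choose (m - 2) else 0) := by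
  rcases m with _ | m
  · simp
  simp only [Nat.lt_succ_iff, ncard_sum_le]
  rcases m with _ | m
  · simp
  rw [if_pos (by omega), show d + 1 + (m + 1 + 1) - 2 = d + m + 1 by omega,
    show m + 1 + 1 - 2 = m by omega,
    show d + 1 + (m + 1 + 1) = d + (m + 1 + 1) + 1 by omega,
    Nat.choose_succ_succ (d + (m + 1 + 1)) (m + 1),
    show d + (m + 1 + 1) = d + m + 1 + 1 by omega, Nat.choose_succ_succ (d + m + 1) m,
    show d + (m + 1) = d + m + 1 by omega]
  simp only [Nat.succ_eq_add_one]
  omega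

/-- the number of `s ∈ ℤ_{≥0}^{2n-1}` with `s₁+⋯+s_{2n-2} ≤ m` and
`s₂+⋯+s_{2n-1} ≤ m` (i.e. `|S(D, m·ω₁)|` for `B_n`) equals
`C(2n+m, m) - C(2n+m-2, m-2)` (the second term being `0` when `m < 2`), which is the
dimension of the irreducible `so_{2n+1}`-module of highest weight `m·ω₁`. -/
theorem SD_omega1_card (n : ℕ) (hn : 2 ≤ n) (m : ℕ) :
    {s : Fin (2 * n - 1) → ℕ |
        (∑ j ∈ Finset.univ.filter (fun j : Fin (2 * n - 1) => (j : ℕ) < 2 * n - 2), s j) ≤ m ∧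
        (∑ j ∈ Finset.univ.filter (fun j : Fin (2 * n - 1) => 1 ≤ (j : ℕ)), s j) ≤ m}.ncard =
      Nat.choose (2 * n + m) m -
        (if 2 ≤ m then Nat.choose (2 * n + m - 2) (m - 2) else 0) := by
  obtain ⟨k, rfl⟩ : ∃ k, n = k + 2 := ⟨n - 2, by omega⟩
  have hmain := choose_add_ncard_sum_lt (2 * k + 1 + 2) m
  rw [← ncard_sum_le, ← ncard_two_sums_le] at hmain
  simp_rw [← Fin.sum_filter_lt_last, ← Fin.sum_filter_one_le] at hmain
  exact hmain
end
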